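/- Assume p^2·e_0 − (p+1)·b_2 + (p−1)·b_1 > 0. Then the associated order 𝔄_{K_2/K_0} = { α ∈ K_0[G] : α·𝔒_2 ⊆ 𝔒_2 } of 𝔒_2 has 𝔒_0-basis { π_0^{−w_j}·Ψ^{(j)} : 0 ≤ j ≤ p^2 − 1 }. -/

import Mathlib

/-- A normalized discrete valuation on a field `K`, recorded as a function
`v : K → ℤ`.  The value of `v` at `0` is irrelevant: all conditions below only
refer to nonzero elements (the convention `v 0 = ∞` being understood). -/
structure IsDiscVal {K : Type*} [Field K] (v : K → ℤ) : Prop where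
  map_one : v 1 = 0
  map_mul : ∀ x y : K, x ≠ 0 → y ≠ 0 → v (x * y) = v x + v y
  min_le_add : ∀ x y : K, x ≠ 0 → y ≠ 0 → x + y ≠ 0 → min (v x) (v y) ≤ v (x + y)
  exists_uniformizer : ∃ π : K, π ≠ 0 ∧ v π = 1

/-- `x` has valuation at least `r`, with the convention `v 0 = ∞`. -/
def ValGe {K : Type*} [Field K] (v : K → ℤ) (r : ℤ) (x : K) : Prop :=
  x = 0 ∨ r ≤ v x

namespace ValGe

variable {K : Type*} [Field K] {v : K → ℤ} {r s : ℤ} {x y : K}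

lemma zero : ValGe v r 0 := Or.inl rfl

lemma mono (h : ValGe v s x) (hrs : r ≤ s) : ValGe v r x :=
  h.imp id hrs.trans

lemma le (h : ValGe v r x) (hx : x ≠ 0) : r ≤ v x := h.resolve_left hx

end ValGe

namespace IsDiscVal

variable {K : Type*} [Field K] {v : K → ℤ}

lemma map_neg_one (hv : IsDiscVal v) : v (-1) = 0 := by
  have h := hv.map_mul (-1) (-1) (by simp) (by simp)
  rw [neg_mul_neg, one_mul, hv.map_one] at h
  omega

lemma map_neg (hv : IsDiscVal v) (x : K) : v (-x) = v x := by
  rcases eq_or_ne x 0 with rfl | hx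
  · simp
  · rw [neg_eq_neg_one_mul, hv.map_mul _ _ (by simp) hx, hv.map_neg_one, zero_add]

lemma map_inv (hv : IsDiscVal v) {x : K} (hx : x ≠ 0) : v x⁻¹ = -v x := by
  have h := hv.map_mul x x⁻¹ hx (inv_ne_zero hx)
  rw [mul_inv_cancel₀ hx, hv.map_one] at h
  omega

lemma map_pow (hv : IsDiscVal v) {x : K} (hx : x ≠ 0) (n : ℕ) : v (x ^ n) = n * v x := by
  induction n with
  | zero => simp [hv.map_one]
  | succ n ih =>
    rw [pow_succ, hv.map_mul _ _ (pow_ne_zero n hx) hx, ih]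
    push_cast
    ring

lemma map_zpow (hv : IsDiscVal v) {x : K} (hx : x ≠ 0) (n : ℤ) : v (x ^ n) = n * v x := by
  rcases n with n | n
  · simpa using hv.map_pow hx n
  · rw [zpow_negSucc, hv.map_inv (pow_ne_zero _ hx), hv.map_pow hx, Int.negSucc_eq]
    push_cast
    ring

lemma valGe_one (hv : IsDiscVal v) : ValGe v 0 1 := Or.inr hv.map_one.ge

lemma valGe_neg (hv : IsDiscVal v) {r : ℤ} {x : K} (h : ValGe v r x) : ValGe v r (-x) := by
  rcases h with rfl | h
  · exact Or.inl neg_zero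
  · exact Or.inr (by rwa [hv.map_neg])

lemma valGe_add (hv : IsDiscVal v) {r : ℤ} {x y : K} (hx : ValGe v r x) (hy : ValGe v r y) :
    ValGe v r (x + y) := by
  rcases eq_or_ne x 0 with rfl | hx0
  · simpa using hy
  rcases eq_or_ne y 0 with rfl | hy0
  · simpa using hx
  by_cases h : x + y = 0
  · exact Or.inl h
  · exact Or.inr ((le_min (hx.le hx0) (hy.le hy0)).trans (hv.min_le_add x y hx0 hy0 h))

lemma valGe_sub (hv : IsDiscVal v) {r : ℤ} {x y : K} (hx : ValGe v r x) (hy : ValGe v r y) :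
    ValGe v r (x - y) := by
  rw [sub_eq_add_neg]
  exact hv.valGe_add hx (hv.valGe_neg hy)

lemma valGe_sum (hv : IsDiscVal v) {ι : Type*} {s : Finset ι} {f : ι → K} {r : ℤ}
    (h : ∀ i ∈ s, ValGe v r (f i)) : ValGe v r (∑ i ∈ s, f i) := by
  induction s using Finset.cons_induction with
  | empty => exact Or.inl rfl
  | cons a s ha ih =>
    rw [Finset.sum_cons]
    exact hv.valGe_add (h a (by simp)) (ih fun i hi => h i (by simp [hi]))

lemma valGe_mul (hv : IsDiscVal v) {r s : ℤ} {x y : K} (hx : ValGe v r x) (hy : ValGe v s y) :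
    ValGe v (r + s) (x * y) := by
  rcases eq_or_ne x 0 with rfl | hx0
  · exact Or.inl (zero_mul y)
  rcases eq_or_ne y 0 with rfl | hy0
  · exact Or.inl (mul_zero x)
  · exact Or.inr (by rw [hv.map_mul x y hx0 hy0]; exact add_le_add (hx.le hx0) (hy.le hy0))

lemma valGe_pow (hv : IsDiscVal v) {r : ℤ} {x : K} (hx : ValGe v r x) (n : ℕ) :
    ValGe v (n * r) (x ^ n) := by
  induction n with
  | zero => simpa using hv.valGe_one
  | succ n ih =>
    rw [pow_succ]
    exact (hv.valGe_mul ih hx).mono (by push_cast; linarith)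

lemma valGe_natCast (hv : IsDiscVal v) (n : ℕ) : ValGe v 0 (n : K) := by
  induction n with
  | zero => exact Or.inl Nat.cast_zero
  | succ n ih => rw [Nat.cast_succ]; exact hv.valGe_add ih hv.valGe_one

lemma valGe_intCast (hv : IsDiscVal v) (n : ℤ) : ValGe v 0 (n : K) := by
  rcases n with n | n
  · simpa using hv.valGe_natCast n
  · rw [Int.cast_negSucc]
    exact hv.valGe_neg (hv.valGe_natCast _)

/-- Adding an element of larger valuation does not change the valuation. -/
lemma map_add_of_valGe (hv : IsDiscVal v) {x y : K} (hx : x ≠ 0) (hy : ValGe v (v x + 1) y) :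
    x + y ≠ 0 ∧ v (x + y) = v x := by
  have hne : x + y ≠ 0 := fun h => by
    have := (hv.valGe_neg hy).le (by rwa [← eq_neg_of_add_eq_zero_left h])
    rw [← eq_neg_of_add_eq_zero_left h] at this
    omega
  refine ⟨hne, le_antisymm ?_ ?_⟩
  · by_contra! hlt
    have h : ValGe v (v x + 1) (x + y - y) := hv.valGe_sub (Or.inr hlt) hy
    rw [add_sub_cancel_right] at h
    have := h.le hx
    omega
  · exact (hv.valGe_add (Or.inr le_rfl) (hy.mono (by omega))).le hne

/-- If the nonzero terms of a sum have distinct valuations, every term has valuation at least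
that of the sum. -/
lemma valGe_of_valGe_sum (hv : IsDiscVal v) {ι : Type*} {s : Finset ι} {f : ι → K} {r : ℤ}
    (hinj : ∀ i ∈ s, ∀ j ∈ s, f i ≠ 0 → f j ≠ 0 → v (f i) = v (f j) → i = j)
    (h : ValGe v r (∑ i ∈ s, f i)) : ∀ i ∈ s, ValGe v r (f i) := by
  classical
  by_contra! hcon
  obtain ⟨i, his, hi⟩ := hcon
  have hfi : f i ≠ 0 := fun h0 => hi (Or.inl h0)
  obtain ⟨k, hk, hmin⟩ := (s.filter (f · ≠ 0)).exists_min_image (fun i => v (f i))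
    ⟨i, by simp [his, hfi]⟩
  rw [Finset.mem_filter] at hk
  have hki := hmin i (by simp [his, hfi])
  have hlt : v (f k) < r := by
    by_contra! hge
    exact hi (Or.inr (hge.trans hki))
  rw [← Finset.add_sum_erase s f hk.1] at h
  have hrest : ValGe v (v (f k) + 1) (∑ i ∈ s.erase k, f i) := by
    refine hv.valGe_sum fun j hj => ?_
    rw [Finset.mem_erase] at hj
    by_cases hfj : f j = 0
    · exact Or.inl hfj
    · refine Or.inr (lt_of_le_of_ne (hmin j (by simp [hj.2, hfj])) fun heq => ?_)
      exact hj.1 (hinj k hk.1 j hj.2 hk.2 hfj heq).symm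
  obtain ⟨hne, heq⟩ := hv.map_add_of_valGe hk.2 hrest
  have := h.le hne
  omega

/-- Natural numbers below the residue characteristic are units. -/
lemma map_natCast_of_lt [CharZero K] (hv : IsDiscVal v) {p : ℕ} (hp : p.Prime)
    (hvp : 1 ≤ v (p : K)) {k : ℕ}
    (hk : 0 < k) (hkp : k < p) : v (k : K) = 0 := by
  have hcop : IsCoprime (k : ℤ) (p : ℤ) :=
    Nat.isCoprime_iff_coprime.2 (Nat.coprime_of_lt_prime hk.ne' hkp hp).symm
  obtain ⟨a, b, hab⟩ := hcop
  have hk0 : (k : K) ≠ 0 := Nat.cast_ne_zero.2 hk.ne'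
  refine le_antisymm ?_ ((hv.valGe_natCast k).le hk0)
  by_contra! hpos
  have hab' : (a : K) * k + b * p = 1 := by exact_mod_cast congrArg (Int.cast : ℤ → K) hab
  have h : ValGe v (0 + 1) (1 : K) := by
    rw [← hab']
    exact hv.valGe_add (hv.valGe_mul (hv.valGe_intCast a) (Or.inr hpos))
      (hv.valGe_mul (hv.valGe_intCast b) (Or.inr hvp))
  have := h.le one_ne_zero
  rw [hv.map_one] at this
  omega

lemma valGe_pow_sub_pow (hv : IsDiscVal v) {x y : K} {r s : ℤ} (hx : ValGe v (-s) x)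
    (hy : ValGe v (-s) y)
    (hxy : ValGe v r (x - y)) (n : ℕ) : ValGe v (r - ((n : ℤ) - 1) * s) (x ^ n - y ^ n) := by
  induction n with
  | zero => simpa using ValGe.zero
  | succ n ih =>
    have h : x ^ (n + 1) - y ^ (n + 1) = x * (x ^ n - y ^ n) + (x - y) * y ^ n := by ring
    rw [h]
    exact hv.valGe_add ((hv.valGe_mul hx ih).mono (by push_cast; linarith))
      ((hv.valGe_mul hxy (hv.valGe_pow hy n)).mono (by push_cast; linarith))

end IsDiscVal

section Choose

variable {K : Type*} [Field K] [CharZero K]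

lemma ring_choose_eq_prod_div (x : K) (n : ℕ) :
    Ring.choose x n = (∏ k ∈ Finset.range n, (x - (k : K))) / (n.factorial : K) := by
  rw [Ring.choose_eq_smul, ← Polynomial.aeval_eq_smeval, Polynomial.aeval_def,
    Polynomial.eval₂_eq_eval_map, descPochhammer_map, descPochhammer_eval_eq_prod_range,
    smul_eq_mul, div_eq_inv_mul]

lemma ring_choose_succ (x : K) (n : ℕ) :
    Ring.choose x (n + 1) = Ring.choose x n * (x - n) * ((n + 1 : ℕ) : K)⁻¹ := by
  have h := n.cast_add_one_ne_zero (R := K)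
  rw [ring_choose_eq_prod_div, ring_choose_eq_prod_div, Finset.prod_range_succ,
    Nat.factorial_succ]
  push_cast
  field_simp

variable {v : K → ℤ} {p : ℕ}

lemma IsDiscVal.valGe_inv_natCast (hv : IsDiscVal v) (hp : p.Prime) (hvp : 1 ≤ v (p : K))
    {n : ℕ} (hn : 0 < n) (hnp : n < p) : ValGe v 0 (n : K)⁻¹ := by
  refine Or.inr ?_
  rw [hv.map_inv (Nat.cast_ne_zero.2 hn.ne'), hv.map_natCast_of_lt hp hvp hn hnp, neg_zero]

lemma IsDiscVal.valGe_choose (hv : IsDiscVal v) (hp : p.Prime) (hvp : 1 ≤ v (p : K))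
    {x : K} {s : ℤ} (hs : 0 ≤ s) (hx : ValGe v (-s) x) {n : ℕ} (hn : n < p) :
    ValGe v (-(n * s)) (Ring.choose x n) := by
  induction n with
  | zero => simpa using hv.valGe_one
  | succ n ih =>
    rw [ring_choose_succ]
    refine (hv.valGe_mul (hv.valGe_mul (ih (by omega))
      (hv.valGe_sub hx ((hv.valGe_natCast n).mono (by omega))))
      (hv.valGe_inv_natCast hp hvp n.succ_pos hn)).mono ?_
    push_cast
    linarith

lemma IsDiscVal.map_choose (hv : IsDiscVal v) (hp : p.Prime) (hvp : 1 ≤ v (p : K))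
    {x : K} (hx0 : x ≠ 0) (hx : v x < 0) {n : ℕ} (hn : n < p) :
    Ring.choose x n ≠ 0 ∧ v (Ring.choose x n) = n * v x := by
  induction n with
  | zero => simpa using hv.map_one
  | succ n ih =>
    obtain ⟨h0, h1⟩ := ih (by omega)
    obtain ⟨h2, h3⟩ := hv.map_add_of_valGe hx0
      (hv.valGe_neg ((hv.valGe_natCast n).mono (show v x + 1 ≤ 0 by omega)))
    rw [← sub_eq_add_neg] at h2 h3
    have hn0 : ((n + 1 : ℕ) : K) ≠ 0 := Nat.cast_ne_zero.2 n.succ_ne_zero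
    rw [ring_choose_succ]
    refine ⟨mul_ne_zero (mul_ne_zero h0 h2) (inv_ne_zero hn0), ?_⟩
    rw [hv.map_mul _ _ (mul_ne_zero h0 h2) (inv_ne_zero hn0), hv.map_mul _ _ h0 h2, h1, h3,
      hv.map_inv hn0, hv.map_natCast_of_lt hp hvp n.succ_pos hn]
    push_cast
    ring

lemma IsDiscVal.valGe_choose_sub (hv : IsDiscVal v) (hp : p.Prime) (hvp : 1 ≤ v (p : K))
    {x y : K} {r s : ℤ} (hs : 0 ≤ s) (hx : ValGe v (-s) x) (hy : ValGe v (-s) y)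
    (hxy : ValGe v r (x - y)) {n : ℕ} (hn : n < p) :
    ValGe v (r - ((n : ℤ) - 1) * s) (Ring.choose x n - Ring.choose y n) := by
  induction n with
  | zero => simpa using ValGe.zero
  | succ n ih =>
    rw [ring_choose_succ, ring_choose_succ, ← sub_mul,
      show Ring.choose x n * (x - n) - Ring.choose y n * (y - n) =
        (Ring.choose x n - Ring.choose y n) * (x - n) + Ring.choose y n * (x - y) by ring]
    refine (hv.valGe_mul (r := r - n * s) (hv.valGe_add ?_ ?_)
      (hv.valGe_inv_natCast hp hvp n.succ_pos hn)).mono (by push_cast; linarith)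
    · exact (hv.valGe_mul (ih (by omega))
        (hv.valGe_sub hx ((hv.valGe_natCast n).mono (by omega)))).mono (by linarith)
    · exact (hv.valGe_mul (hv.valGe_choose hp hvp hs hy (by omega)) hxy).mono (by linarith)

end Choose

section WittAddition

open Polynomial

variable {K : Type*} [Field K] {p : ℕ}

/-- The Witt vector addition polynomial `(x ^ p + y ^ p - (x + y) ^ p) / p`. -/
def wittD (p : ℕ) (x y : K) : K := (x ^ p + y ^ p - (x + y) ^ p) / (p : K)

lemma wittD_comm (x y : K) : wittD p x y = wittD p y x := by
  rw [wittD, wittD, add_comm (x ^ p), add_comm x]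

lemma IsDiscVal.valGe_aeval {v : K → ℤ} (hv : IsDiscVal v) {x : K} {s : ℤ} (hs : 0 ≤ s)
    (hx : ValGe v (-s) x) (f : ℤ[X]) {n : ℕ} (hn : f.natDegree ≤ n) :
    ValGe v (-(n * s)) (aeval x f) := by
  rw [aeval_eq_sum_range]
  refine hv.valGe_sum fun i hi => ?_
  rw [Finset.mem_range] at hi
  rw [zsmul_eq_mul]
  refine (hv.valGe_mul (hv.valGe_intCast _) (hv.valGe_pow hx i)).mono ?_
  have : (i : ℤ) ≤ n := by omega
  nlinarith

/-- The Frobenius congruence `f(x) ^ p ≡ f(x ^ p)` modulo `p` for integral polynomials. -/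
lemma IsDiscVal.valGe_aeval_pow_sub {v : K → ℤ} (hv : IsDiscVal v) (hp : p.Prime) {x : K} {s : ℤ}
    (hs : 0 ≤ s) (hx : ValGe v (-s) x) (f : ℤ[X]) {n : ℕ} (hn : f.natDegree ≤ n) :
    ValGe v (v (p : K) - (p * n : ℕ) * s) (aeval x f ^ p - aeval (x ^ p) f) := by
  have : Fact p.Prime := ⟨hp⟩
  have hdvd : C (p : ℤ) ∣ f ^ p - expand ℤ p f := by
    rw [C_dvd_iff_dvd_coeff]
    intro i
    have h : (f ^ p - expand ℤ p f).map (Int.castRingHom (ZMod p)) = 0 := by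
      rw [Polynomial.map_sub, Polynomial.map_pow, map_expand, ← ZMod.expand_card, sub_self]
    have h' := congrArg (fun g => g.coeff i) h
    simp only [coeff_map, coeff_zero, eq_intCast] at h'
    exact (ZMod.intCast_zmod_eq_zero_iff_dvd _ p).1 h'
  obtain ⟨g, hg⟩ := hdvd
  have hgdeg : g.natDegree ≤ p * n := by
    rw [← natDegree_C_mul (a := (p : ℤ)) (by exact_mod_cast hp.ne_zero), ← hg]
    refine (natDegree_sub_le _ _).trans (max_le ?_ ?_)
    · exact (natDegree_pow_le).trans (Nat.mul_le_mul_left p hn)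
    · rw [natDegree_expand, mul_comm]
      exact Nat.mul_le_mul_left p hn
  have h := congrArg (aeval x) hg
  rw [_root_.map_sub, _root_.map_pow, expand_aeval, _root_.map_mul, aeval_C] at h
  rw [h]
  refine (hv.valGe_mul (r := v (p : K)) (Or.inr ?_) (hv.valGe_aeval hs hx g hgdeg)).mono
    (by linarith)
  simp

variable [CharZero K]

lemma add_pow_eq_sub_wittD (hp : p.Prime) (x y : K) :
    (x + y) ^ p = x ^ p + y ^ p - p * wittD p x y := by
  have : (p : K) ≠ 0 := Nat.cast_ne_zero.2 hp.ne_zero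
  rw [wittD]
  field_simp
  ring

lemma wittD_cocycle (x y z : K) :
    wittD p x y + wittD p (x + y) z = wittD p (x + z) y + wittD p x z := by
  simp only [wittD]
  rw [add_right_comm x z y]
  ring

lemma wittD_eq_sum (hp : p.Prime) (x y : K) :
    wittD p x y = -∑ m ∈ Finset.range (p - 1),
      ((p.choose (m + 1) / p : ℕ) : K) * (x ^ (m + 1) * y ^ (p - 1 - m)) := by
  have hp0 : (p : K) ≠ 0 := Nat.cast_ne_zero.2 hp.ne_zero
  obtain ⟨k, rfl⟩ : ∃ k, p = k + 1 := ⟨p - 1, by have := hp.pos; omega⟩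
  rw [wittD, add_pow, Finset.sum_range_succ, Finset.sum_range_succ', div_eq_iff hp0]
  simp only [Nat.add_sub_cancel, Nat.choose_self, Nat.choose_zero_right, Nat.sub_self,
    Nat.sub_zero, pow_zero, Nat.cast_one, mul_one, one_mul, Nat.add_sub_add_right]
  rw [neg_mul, Finset.sum_mul]
  have h : ∀ m ∈ Finset.range k, x ^ (m + 1) * y ^ (k - m) * ((k + 1).choose (m + 1) : K) =
      (((k + 1).choose (m + 1) / (k + 1) : ℕ) : K) * (x ^ (m + 1) * y ^ (k - m)) *
        ((k + 1 : ℕ) : K) := by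
    intro m hm
    rw [Finset.mem_range] at hm
    rw [Nat.cast_div (hp.dvd_choose_self m.succ_ne_zero (by omega)) hp0]
    field_simp
  rw [Finset.sum_congr rfl h]
  ring

variable {v : K → ℤ}

lemma IsDiscVal.valGe_wittD (hv : IsDiscVal v) (hp : p.Prime) {x y : K} {s t : ℤ} (hst : t ≤ s)
    (hx : ValGe v (-s) x) (hy : ValGe v (-t) y) :
    ValGe v (-(((p : ℤ) - 1) * s + t)) (wittD p x y) := by
  rw [wittD_eq_sum hp]
  refine hv.valGe_neg (hv.valGe_sum fun m hm => ?_)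
  rw [Finset.mem_range] at hm
  refine (hv.valGe_mul (hv.valGe_natCast _)
    (hv.valGe_mul (hv.valGe_pow hx (m + 1)) (hv.valGe_pow hy (p - 1 - m)))).mono ?_
  have hcast : ((p - 1 - m : ℕ) : ℤ) = p - 1 - m := by omega
  rw [hcast]
  push_cast
  have : (0 : ℤ) ≤ p - 2 - m := by omega
  nlinarith [mul_nonneg this (sub_nonneg.2 hst)]

lemma IsDiscVal.valGe_wittD_sub (hv : IsDiscVal v) (hp : p.Prime) {x x' y : K} {r s t : ℤ}
    (hst : s ≤ t) (hx : ValGe v (-s) x) (hx' : ValGe v (-s) x') (hxx' : ValGe v r (x - x'))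
    (hy : ValGe v (-t) y) :
    ValGe v (r - ((p : ℤ) - 1) * t) (wittD p x y - wittD p x' y) := by
  rw [wittD_eq_sum hp, wittD_eq_sum hp, neg_sub_neg,
    ← Finset.sum_sub_distrib]
  refine hv.valGe_sum fun m hm => ?_
  rw [Finset.mem_range] at hm
  rw [← mul_sub, ← sub_mul, ← neg_sub (x ^ (m + 1)), neg_mul]
  refine (hv.valGe_mul (hv.valGe_natCast _) (hv.valGe_neg
    (hv.valGe_mul (hv.valGe_pow_sub_pow hx hx' hxx' (m + 1))
      (hv.valGe_pow hy (p - 1 - m))))).mono ?_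
  have hcast : ((p - 1 - m : ℕ) : ℤ) = p - 1 - m := by omega
  rw [hcast]
  push_cast
  nlinarith [mul_nonneg (Int.natCast_nonneg m) (sub_nonneg.2 hst)]

lemma IsDiscVal.valGe_wittD_one_pow_sub (hv : IsDiscVal v) (hp : p.Prime) {x : K} {s : ℤ}
    (hs : 0 ≤ s) (hx : ValGe v (-s) x) :
    ValGe v (v (p : K) - p * ((p : ℤ) - 1) * s) (wittD p x 1 ^ p - wittD p (x ^ p) 1) := by
  set f : ℤ[X] := -∑ m ∈ Finset.range (p - 1), ((p.choose (m + 1) / p : ℕ) : ℤ[X]) * X ^ (m + 1)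
    with hf
  have hfx : ∀ y : K, wittD p y 1 = aeval y f := fun y => by
    rw [wittD_eq_sum hp, hf]
    simp only [one_pow, mul_one, _root_.map_neg, _root_.map_sum, _root_.map_mul, map_natCast,
      _root_.map_pow, aeval_X]
  have hdeg : f.natDegree ≤ p - 1 := by
    rw [hf, natDegree_neg]
    refine natDegree_sum_le_of_forall_le _ _ fun m hm => ?_
    rw [Finset.mem_range] at hm
    rw [← C_eq_natCast]
    exact (natDegree_C_mul_X_pow_le _ _).trans (by omega)
  rw [hfx, hfx]
  refine (hv.valGe_aeval_pow_sub hp hs hx f hdeg).mono (le_of_eq ?_)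
  have := hp.pos
  push_cast [Nat.cast_sub this]
  ring

lemma sum_wittD_one (hp : p.Prime) (x : K) :
    ∑ k ∈ Finset.range p, wittD p (x + k) 1 = 1 + wittD p x p - p ^ (p - 1) := by
  have hp0 : (p : K) ≠ 0 := Nat.cast_ne_zero.2 hp.ne_zero
  have h : ∀ n : ℕ, ∑ k ∈ Finset.range n, wittD p (x + k) 1 = (x ^ p + n - (x + n) ^ p) / p := by
    intro n
    induction n with
    | zero => simp
    | succ n ih =>
      rw [Finset.sum_range_succ, ih, wittD]
      push_cast
      ring
  rw [h, add_pow_eq_sub_wittD hp]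
  have : (p : K) ^ p = p ^ (p - 1) * p := by rw [← pow_succ, Nat.sub_add_cancel hp.pos]
  rw [this]
  field_simp
  ring

end WittAddition

section TotallyRamified

variable {F L : Type*} [Field F] [Field L] [Algebra F L] {v : F → ℤ} {w : L → ℤ} {q : ℤ}

/-- `w` restricts to `q` times the valuation `v` on the base field. -/
def RamifiedOver (v : F → ℤ) (w : L → ℤ) (q : ℤ) : Prop :=
  ∀ x : F, x ≠ 0 → w (algebraMap F L x) = q * v x

lemma RamifiedOver.valGe_smul (hram : RamifiedOver v w q) (hw : IsDiscVal w) (hq : 0 < q)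
    {c : F} {r s : ℤ} (hc : ValGe v s c) {x : L} (hx : ValGe w r x) :
    ValGe w (q * s + r) (c • x) := by
  rcases eq_or_ne c 0 with rfl | hc0
  · exact Or.inl (zero_smul F x)
  · rw [Algebra.smul_def]
    refine hw.valGe_mul (Or.inr ?_) hx
    rw [hram c hc0]
    exact mul_le_mul_of_nonneg_left (hc.le hc0) hq.le

lemma RamifiedOver.map_smul (hram : RamifiedOver v w q) (hw : IsDiscVal w) {c : F} (hc : c ≠ 0)
    {x : L} (hx : x ≠ 0) : w (c • x) = q * v c + w x := by
  rw [Algebra.smul_def, hw.map_mul _ _ (by simpa using hc) hx, hram c hc]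

variable {ι : Type*}

/-- Nonzero elements whose valuations are pairwise incongruent modulo `q`. -/
structure IncongruentVal (w : L → ℤ) (q : ℤ) (e : ι → L) : Prop where
  ne_zero : ∀ i, e i ≠ 0
  eq_of_dvd : ∀ i j, q ∣ w (e i) - w (e j) → i = j

lemma IncongruentVal.valGe_of_valGe_sum (hram : RamifiedOver v w q) (hw : IsDiscVal w)
    {e : ι → L} (he : IncongruentVal w q e) {s : Finset ι} {c : ι → F} {r : ℤ}
    (h : ValGe w r (∑ i ∈ s, c i • e i)) : ∀ i ∈ s, ValGe w r (c i • e i) := by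
  refine hw.valGe_of_valGe_sum (fun i _ j _ hi hj hij => ?_) h
  have hci := left_ne_zero_of_smul hi
  have hcj := left_ne_zero_of_smul hj
  rw [hram.map_smul hw hci (he.ne_zero i), hram.map_smul hw hcj (he.ne_zero j)] at hij
  exact he.eq_of_dvd i j ⟨v (c j) - v (c i), by linarith⟩

lemma IncongruentVal.linearIndependent [Fintype ι] (hram : RamifiedOver v w q)
    (hw : IsDiscVal w) {e : ι → L} (he : IncongruentVal w q e) : LinearIndependent F e := by
  rw [Fintype.linearIndependent_iff]
  intro c hc i
  by_contra hci
  have hne : c i • e i ≠ 0 := smul_ne_zero hci (he.ne_zero i)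
  have h := he.valGe_of_valGe_sum hram hw (s := Finset.univ) (c := c)
    (r := w (c i • e i) + 1) (Or.inl hc) i (Finset.mem_univ i)
  have := h.le hne
  omega

/-- A totally ramified extension carries only one extension of the valuation. -/
lemma RamifiedOver.eq_of_basis [Fintype ι] (hv : IsDiscVal v) (hw : IsDiscVal w) {w' : L → ℤ}
    (hw' : IsDiscVal w') (hq : 0 < q) (hram : RamifiedOver v w q) (hram' : RamifiedOver v w' q)
    (B : Module.Basis ι F L) (hB : IncongruentVal w q B) {x : L} (hx : x ≠ 0) :
    w' x = w x := by
  have hbound : ∃ C : ℤ, ∀ y : L, ValGe w 0 y → ValGe w' C y := by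
    obtain ⟨C, hC⟩ := (Set.finite_range fun i => w' (B i) - w (B i)).bddBelow
    refine ⟨C, fun y hy => ?_⟩
    rw [← B.sum_repr y] at hy ⊢
    refine hw'.valGe_sum fun i _ => ?_
    rcases eq_or_ne (B.repr y i) 0 with h0 | h0
    · exact Or.inl (by rw [h0, zero_smul])
    have hi := (hB.valGe_of_valGe_sum hram hw hy i (Finset.mem_univ i)).le
      (smul_ne_zero h0 (hB.ne_zero i))
    rw [hram.map_smul hw h0 (hB.ne_zero i)] at hi
    refine Or.inr ?_
    rw [hram'.map_smul hw' h0 (hB.ne_zero i)]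
    have := hC (Set.mem_range_self i)
    linarith
  obtain ⟨C, hC⟩ := hbound
  have hnonneg : ∀ y : L, y ≠ 0 → 0 ≤ w y → 0 ≤ w' y := by
    intro y hy hwy
    by_contra! hneg
    have h := (hC (y ^ (C.natAbs + 1)) (Or.inr (by rw [hw.map_pow hy]; positivity))).le
      (pow_ne_zero _ hy)
    rw [hw'.map_pow hy] at h
    push_cast at h
    have habs := neg_abs_le C
    nlinarith [abs_nonneg C]
  have hunit : ∀ y : L, y ≠ 0 → w y = 0 → w' y = 0 := by
    intro y hy hwy
    have h := hnonneg y⁻¹ (inv_ne_zero hy) (by rw [hw.map_inv hy, hwy, neg_zero])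
    rw [hw'.map_inv hy] at h
    have := hnonneg y hy hwy.ge
    omega
  obtain ⟨t, ht0, ht⟩ := hv.exists_uniformizer
  have htz : t ^ (-w x) ≠ 0 := zpow_ne_zero _ ht0
  have hxq : x ^ q.toNat ≠ 0 := pow_ne_zero _ hx
  have hqc : (q.toNat : ℤ) = q := Int.toNat_of_nonneg hq.le
  have h := hunit (t ^ (-w x) • x ^ q.toNat) (smul_ne_zero htz hxq) (by
    rw [hram.map_smul hw htz hxq, hv.map_zpow ht0, hw.map_pow hx, ht, hqc]
    ring)
  rw [hram'.map_smul hw' htz hxq, hv.map_zpow ht0, hw'.map_pow hx, ht, hqc] at h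
  have : q * (w' x - w x) = 0 := by linarith
  rcases mul_eq_zero.1 this with h0 | h0 <;> omega

lemma IsDiscVal.comp_algEquiv (hw : IsDiscVal w) (σ : L ≃ₐ[F] L) :
    IsDiscVal fun x => w (σ x) where
  map_one := by rw [_root_.map_one, hw.map_one]
  map_mul x y hx hy := by
    rw [_root_.map_mul, hw.map_mul _ _ (by simpa using hx) (by simpa using hy)]
  min_le_add x y hx hy hxy := by
    rw [map_add]
    exact hw.min_le_add _ _ (by simpa using hx) (by simpa using hy)
      (by rwa [← map_add, map_ne_zero])
  exists_uniformizer := by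
    obtain ⟨t, ht0, ht⟩ := hw.exists_uniformizer
    exact ⟨σ.symm t, by simpa using ht0, by simpa using ht⟩

/-- Automorphisms of a totally ramified extension preserve the valuation. -/
lemma RamifiedOver.map_algEquiv [Fintype ι] (hv : IsDiscVal v) (hw : IsDiscVal w) (hq : 0 < q)
    (hram : RamifiedOver v w q) (B : Module.Basis ι F L) (hB : IncongruentVal w q B)
    (σ : L ≃ₐ[F] L) (x : L) : w (σ x) = w x := by
  rcases eq_or_ne x 0 with rfl | hx
  · rw [map_zero]
  · exact hram.eq_of_basis hv hw (hw.comp_algEquiv σ) hq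
      (fun y hy => by simpa using hram y hy) B hB hx

/-- The linear operator `A` raises valuations by at least `r`. -/
def Raises (w : L → ℤ) (A : Module.End F L) (r : ℤ) : Prop :=
  ∀ x s, ValGe w s x → ValGe w (s + r) (A x)

namespace Raises

variable {A B A' B' : Module.End F L} {r s : ℤ}

lemma mono (h : Raises w A s) (hrs : r ≤ s) : Raises w A r :=
  fun x t hx => (h x t hx).mono (by omega)

lemma zero : Raises w (0 : Module.End F L) r := fun _ _ _ => Or.inl rfl

lemma one : Raises w (1 : Module.End F L) 0 := fun x s hx => by simpa using hx

lemma neg (hw : IsDiscVal w) (h : Raises w A r) : Raises w (-A) r :=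
  fun x t hx => hw.valGe_neg (h x t hx)

lemma add (hw : IsDiscVal w) (h : Raises w A r) (h' : Raises w B r) : Raises w (A + B) r :=
  fun x t hx => hw.valGe_add (h x t hx) (h' x t hx)

lemma sub (hw : IsDiscVal w) (h : Raises w A r) (h' : Raises w B r) : Raises w (A - B) r :=
  fun x t hx => hw.valGe_sub (h x t hx) (h' x t hx)

lemma sum (hw : IsDiscVal w) {s : Finset ι} {f : ι → Module.End F L}
    (h : ∀ i ∈ s, Raises w (f i) r) : Raises w (∑ i ∈ s, f i) r := fun x t hx => by
  rw [LinearMap.sum_apply]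
  exact hw.valGe_sum fun i hi => h i hi x t hx

lemma mul (h : Raises w A r) (h' : Raises w B s) : Raises w (A * B) (r + s) :=
  fun x t hx => (h _ _ (h' x t hx)).mono (by omega)

lemma pow (h : Raises w A r) (n : ℕ) : Raises w (A ^ n) (n * r) := by
  induction n with
  | zero => simpa using one
  | succ n ih =>
    rw [pow_succ]
    exact (ih.mul h).mono (by push_cast; linarith)

lemma smul (hw : IsDiscVal w) (hq : 0 < q) (hram : RamifiedOver v w q) {c : F}
    (hc : ValGe v s c) (h : Raises w A r) : Raises w (c • A) (q * s + r) :=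
  fun x t hx => (hram.valGe_smul hw hq hc (h x t hx)).mono (by omega)

lemma natCast_mul (hw : IsDiscVal w) {n : ℕ} {t : ℤ} (hn : ValGe w t (n : L))
    (h : Raises w A r) : Raises w ((n : Module.End F L) * A) (t + r) := fun x u hx => by
  rw [Module.End.mul_apply, Module.End.natCast_apply, nsmul_eq_mul]
  exact (hw.valGe_mul hn (h x u hx)).mono (by omega)

/-- Congruent operators have congruent products. -/
lemma mul_sub_mul (hw : IsDiscVal w) {t t' u : ℤ} (hAB : Raises w (A - B) t) (hB : Raises w B r)
    (hA' : Raises w A' s) (hAB' : Raises w (A' - B') t') (hu : u ≤ t + s) (hu' : u ≤ r + t') :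
    Raises w (A * A' - B * B') u := by
  have h : A * A' - B * B' = (A - B) * A' + B * (A' - B') := by
    rw [sub_mul, mul_sub]
    abel
  rw [h]
  exact ((hAB.mul hA').mono hu).add hw ((hB.mul hAB').mono hu')

/-- Congruent operators have congruent powers. -/
lemma pow_sub_pow (hw : IsDiscVal w) {t : ℤ} (hA : Raises w A r) (hB : Raises w B r)
    (hAB : Raises w (A - B) (r + t)) (n : ℕ) : Raises w (A ^ n - B ^ n) (n * r + t) := by
  induction n with
  | zero => simpa using zero
  | succ n ih =>
    rw [pow_succ, pow_succ]
    exact mul_sub_mul hw ih (hB.pow n) hA hAB (by push_cast; linarith) (by push_cast; linarith)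

lemma of_basis [Fintype ι] (hw : IsDiscVal w) (hram : RamifiedOver v w q)
    (E : Module.Basis ι F L) (hE : IncongruentVal w q E)
    (h : ∀ i, ValGe w (w (E i) + r) (A (E i))) : Raises w A r := by
  intro x s hx
  rw [← E.sum_repr x] at hx ⊢
  rw [_root_.map_sum]
  refine hw.valGe_sum fun i _ => ?_
  rw [_root_.map_smul]
  rcases eq_or_ne (E.repr x i) 0 with h0 | h0
  · exact Or.inl (by rw [h0, zero_smul])
  have hi := (hE.valGe_of_valGe_sum hram hw hx i (Finset.mem_univ i)).le
    (smul_ne_zero h0 (hE.ne_zero i))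
  rw [hram.map_smul hw h0 (hE.ne_zero i)] at hi
  rw [Algebra.smul_def]
  refine (hw.valGe_mul (Or.inr le_rfl) (h i)).mono ?_
  rw [hram _ h0]
  linarith

/-- The mixed terms of the binomial expansion of `(1 + A) ^ p` are divisible by `p`. -/
lemma one_add_pow_sub (hw : IsDiscVal w) {p : ℕ} (hp : p.Prime) (hr : 0 ≤ r)
    (h : Raises w A r) : Raises w ((1 + A) ^ p - 1 - A ^ p) (w (p : L) + r) := by
  obtain ⟨k, rfl⟩ : ∃ k, p = k + 1 := ⟨p - 1, by have := hp.pos; omega⟩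
  rw [add_comm, (Commute.one_right A).add_pow, Finset.sum_range_succ, Finset.sum_range_succ']
  simp only [one_pow, mul_one, pow_zero, Nat.choose_zero_right, Nat.choose_self, Nat.cast_one]
  rw [add_sub_right_comm, add_sub_cancel_right, add_sub_cancel_right]
  refine sum hw fun i hi => ?_
  rw [Finset.mem_range] at hi
  obtain ⟨c, hc⟩ := hp.dvd_choose_self i.succ_ne_zero (by omega)
  rw [hc, ← Nat.cast_comm]
  refine natCast_mul hw ?_ ((h.pow (i + 1)).mono (by push_cast; nlinarith))
  rw [Nat.cast_mul]
  exact (hw.valGe_mul (Or.inr le_rfl) (hw.valGe_natCast c)).mono (by omega)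

end Raises

end TotallyRamified

section Scaffold

variable {F L : Type*} [Field F] [Field L] [Algebra F L]
  {p : ℕ} {v : F → ℤ} {w : L → ℤ} {b₁ b₂ : ℤ} {X Y : L}

/-- A totally ramified extension of degree `p ^ 2` with elements `X`, `Y` of valuations
`-p * b₁` and `-b₂`, whose binomial coefficients form a basis with incongruent valuations. -/
structure GeneratorPair (p : ℕ) (v : F → ℤ) (w : L → ℤ) (b₁ b₂ : ℤ) (X Y : L) : Prop where
  prime : p.Prime
  base : IsDiscVal v
  top : IsDiscVal w
  ramified : RamifiedOver v w ((p : ℤ) ^ 2)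
  finrank_eq : Module.finrank F L = p ^ 2
  one_le_map_prime : 1 ≤ v (p : F)
  pos : 0 < b₁
  lt : b₁ < b₂
  not_dvd : ¬ (p : ℤ) ∣ b₁
  dvd_sub : (p : ℤ) ^ 2 ∣ b₂ - b₁
  X_ne_zero : X ≠ 0
  map_X : w X = -(p * b₁)
  Y_ne_zero : Y ≠ 0
  map_Y : w Y = -b₂

namespace GeneratorPair

lemma sq_pos (G : GeneratorPair (F := F) p v w b₁ b₂ X Y) : 0 < (p : ℤ) ^ 2 :=
  pow_pos (by exact_mod_cast G.prime.pos) 2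

lemma mul_pos (G : GeneratorPair (F := F) p v w b₁ b₂ X Y) : 0 < p * b₁ :=
  _root_.mul_pos (by exact_mod_cast G.prime.pos) G.pos

/-- The exponents `i * b₂ + j * p * b₁` with `0 ≤ i, j < p` are incongruent modulo `p ^ 2`. -/
lemma eq_of_sq_dvd (G : GeneratorPair (F := F) p v w b₁ b₂ X Y) {i j i' j' : ℕ} (hi : i < p)
    (hj : j < p) (hi' : i' < p) (hj' : j' < p)
    (h : (p : ℤ) ^ 2 ∣ (i * b₂ + j * (p * b₁)) - (i' * b₂ + j' * (p * b₁))) :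
    i = i' ∧ j = j' := by
  have hpZ : Prime (p : ℤ) := Nat.prime_iff_prime_int.1 G.prime
  have hdvd : (p : ℤ) ^ 2 ∣ b₁ * (((i : ℤ) - i') + p * ((j : ℤ) - j')) := by
    obtain ⟨c, hc⟩ := G.dvd_sub
    obtain ⟨d, hd⟩ := h
    refine ⟨d - c * ((i : ℤ) - i'), ?_⟩
    linear_combination hd - ((i : ℤ) - i') * hc
  have hcop : IsCoprime ((p : ℤ) ^ 2) b₁ :=
    IsCoprime.pow_left ((Prime.coprime_iff_not_dvd hpZ).2 G.not_dvd)
  have hdvd' := hcop.dvd_of_dvd_mul_left hdvd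
  have small : ∀ {a b : ℕ}, a < p → b < p → (p : ℤ) ∣ (a : ℤ) - b → a = b := by
    intro a b ha hb hab
    have := Int.eq_zero_of_abs_lt_dvd hab (by rw [abs_lt]; constructor <;> omega)
    omega
  have hii : i = i' := by
    refine small hi hi' ?_
    have h1 : (p : ℤ) ∣ ((i : ℤ) - i') + p * ((j : ℤ) - j') :=
      (dvd_pow_self _ two_ne_zero).trans hdvd'
    exact (dvd_add_left (dvd_mul_right _ _)).1 h1
  refine ⟨hii, small hj hj' ?_⟩
  rw [hii, sub_self, zero_add, sq] at hdvd'
  exact Int.dvd_of_mul_dvd_mul_left (by exact_mod_cast G.prime.ne_zero) hdvd'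

lemma nonempty (G : GeneratorPair (F := F) p v w b₁ b₂ X Y) : Nonempty (Fin p × Fin p) :=
  ⟨(⟨0, G.prime.pos⟩, ⟨0, G.prime.pos⟩)⟩

variable [CharZero F]

lemma map_prime (G : GeneratorPair (F := F) p v w b₁ b₂ X Y) :
    w (p : L) = (p : ℤ) ^ 2 * v (p : F) := by
  rw [← G.ramified _ (Nat.cast_ne_zero.2 G.prime.ne_zero), map_natCast]

lemma one_le_map_prime_top (G : GeneratorPair (F := F) p v w b₁ b₂ X Y) : 1 ≤ w (p : L) := by
  rw [G.map_prime]
  nlinarith [G.sq_pos, G.one_le_map_prime]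

variable [CharZero L]

lemma map_choose_mul (G : GeneratorPair (F := F) p v w b₁ b₂ X Y) {i j : ℕ} (hi : i < p)
    (hj : j < p) : Ring.choose Y i * Ring.choose X j ≠ 0 ∧
      w (Ring.choose Y i * Ring.choose X j) = -(i * b₂ + j * (p * b₁)) := by
  have := G.pos
  have := G.lt
  have := G.mul_pos
  obtain ⟨hY0, hY⟩ := G.top.map_choose G.prime G.one_le_map_prime_top G.Y_ne_zero
    (by rw [G.map_Y]; omega) hi
  obtain ⟨hX0, hX⟩ := G.top.map_choose G.prime G.one_le_map_prime_top G.X_ne_zero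
    (by rw [G.map_X]; omega) hj
  refine ⟨mul_ne_zero hY0 hX0, ?_⟩
  rw [G.top.map_mul _ _ hY0 hX0, hY, hX, G.map_X, G.map_Y]
  ring

lemma incongruentVal (G : GeneratorPair (F := F) p v w b₁ b₂ X Y) :
    IncongruentVal w ((p : ℤ) ^ 2)
      fun ij : Fin p × Fin p => Ring.choose Y ij.1 * Ring.choose X ij.2 where
  ne_zero ij := (G.map_choose_mul ij.1.2 ij.2.2).1
  eq_of_dvd ij kl h := by
    rw [(G.map_choose_mul ij.1.2 ij.2.2).2, (G.map_choose_mul kl.1.2 kl.2.2).2,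
      neg_sub_neg] at h
    obtain ⟨h1, h2⟩ := G.eq_of_sq_dvd kl.1.2 kl.2.2 ij.1.2 ij.2.2 h
    exact Prod.ext (Fin.ext h1.symm) (Fin.ext h2.symm)

/-- The basis of products of binomial coefficients. -/
noncomputable def basis (G : GeneratorPair (F := F) p v w b₁ b₂ X Y) :
    Module.Basis (Fin p × Fin p) F L :=
  haveI := G.nonempty
  basisOfLinearIndependentOfCardEqFinrank
    (G.incongruentVal.linearIndependent G.ramified G.top)
    (by rw [G.finrank_eq, Fintype.card_prod, Fintype.card_fin, sq])

lemma coe_basis (G : GeneratorPair (F := F) p v w b₁ b₂ X Y) : (G.basis : Fin p × Fin p → L) =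
    fun ij => Ring.choose Y ij.1 * Ring.choose X ij.2 :=
  haveI := G.nonempty
  coe_basisOfLinearIndependentOfCardEqFinrank _ _

lemma incongruentVal_basis (G : GeneratorPair (F := F) p v w b₁ b₂ X Y) : IncongruentVal w
    ((p : ℤ) ^ 2) G.basis := by
  rw [coe_basis]
  exact G.incongruentVal

lemma map_algEquiv (G : GeneratorPair (F := F) p v w b₁ b₂ X Y) (σ : L ≃ₐ[F] L) (x : L) : w
    (σ x) = w x :=
  G.ramified.map_algEquiv G.base G.top G.sq_pos G.basis G.incongruentVal_basis σ x

lemma valGe_algEquiv (G : GeneratorPair (F := F) p v w b₁ b₂ X Y) (σ : L ≃ₐ[F] L) {r : ℤ} {x : L}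
    (h : ValGe w r x) : ValGe w r (σ x) := by
  rcases h with rfl | h
  · exact Or.inl (map_zero σ)
  · exact Or.inr (by rwa [G.map_algEquiv])

/-- The operator lowering the index of the binomial coefficient of `X`. -/
noncomputable def lowerX (G : GeneratorPair (F := F) p v w b₁ b₂ X Y) : Module.End F L :=
  G.basis.constr F fun ij =>
    if (ij.2 : ℕ) = 0 then 0 else Ring.choose Y ij.1 * Ring.choose X (ij.2 - 1)

/-- The operator lowering the index of the binomial coefficient of `Y`. -/
noncomputable def lowerY (G : GeneratorPair (F := F) p v w b₁ b₂ X Y) : Module.End F L :=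
  G.basis.constr F fun ij =>
    if (ij.1 : ℕ) = 0 then 0 else Ring.choose Y (ij.1 - 1) * Ring.choose X ij.2

lemma lowerX_apply (G : GeneratorPair (F := F) p v w b₁ b₂ X Y) {i j : ℕ} (hi : i < p)
    (hj : j < p) :
    G.lowerX (Ring.choose Y i * Ring.choose X j) =
      if j = 0 then 0 else Ring.choose Y i * Ring.choose X (j - 1) := by
  have h := G.basis.constr_basis F (fun ij =>
    if (ij.2 : ℕ) = 0 then 0 else Ring.choose Y ij.1 * Ring.choose X (ij.2 - 1))
    (⟨i, hi⟩, ⟨j, hj⟩)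
  rw [coe_basis] at h
  exact h

lemma lowerY_apply (G : GeneratorPair (F := F) p v w b₁ b₂ X Y) {i j : ℕ} (hi : i < p)
    (hj : j < p) :
    G.lowerY (Ring.choose Y i * Ring.choose X j) =
      if i = 0 then 0 else Ring.choose Y (i - 1) * Ring.choose X j := by
  have h := G.basis.constr_basis F (fun ij =>
    if (ij.1 : ℕ) = 0 then 0 else Ring.choose Y (ij.1 - 1) * Ring.choose X ij.2)
    (⟨i, hi⟩, ⟨j, hj⟩)
  rw [coe_basis] at h
  exact h

lemma lowerX_pow_apply (G : GeneratorPair (F := F) p v w b₁ b₂ X Y) {i j : ℕ} (hi : i < p)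
    (hj : j < p) (k : ℕ) :
    (G.lowerX ^ k) (Ring.choose Y i * Ring.choose X j) =
      if j < k then 0 else Ring.choose Y i * Ring.choose X (j - k) := by
  induction k with
  | zero => simp
  | succ k ih =>
    rw [pow_succ', Module.End.mul_apply, ih]
    rcases lt_trichotomy j k with h | h | h
    · rw [if_pos h, if_pos (by omega), map_zero]
    · rw [if_neg (by omega), if_pos (by omega), G.lowerX_apply hi (by omega), if_pos (by omega)]
    · rw [if_neg (by omega), if_neg (by omega), G.lowerX_apply hi (by omega), if_neg (by omega),
        Nat.sub_sub]

lemma lowerY_pow_apply (G : GeneratorPair (F := F) p v w b₁ b₂ X Y) {i j : ℕ} (hi : i < p)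
    (hj : j < p) (k : ℕ) :
    (G.lowerY ^ k) (Ring.choose Y i * Ring.choose X j) =
      if i < k then 0 else Ring.choose Y (i - k) * Ring.choose X j := by
  induction k with
  | zero => simp
  | succ k ih =>
    rw [pow_succ', Module.End.mul_apply, ih]
    rcases lt_trichotomy i k with h | h | h
    · rw [if_pos h, if_pos (by omega), map_zero]
    · rw [if_neg (by omega), if_pos (by omega), G.lowerY_apply (by omega) hj, if_pos (by omega)]
    · rw [if_neg (by omega), if_neg (by omega), G.lowerY_apply (by omega) hj, if_neg (by omega),
        Nat.sub_sub]

lemma raises_of_choose (G : GeneratorPair (F := F) p v w b₁ b₂ X Y) {A : Module.End F L} {r : ℤ}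
    (h : ∀ i j : ℕ, i < p → j < p →
      ValGe w (-(i * b₂ + j * (p * b₁)) + r) (A (Ring.choose Y i * Ring.choose X j))) :
    Raises w A r := by
  refine Raises.of_basis G.top G.ramified G.basis G.incongruentVal_basis fun ij => ?_
  rw [coe_basis, (G.map_choose_mul ij.1.2 ij.2.2).2]
  exact h _ _ ij.1.2 ij.2.2

lemma raises_lowerX (G : GeneratorPair (F := F) p v w b₁ b₂ X Y) : Raises w G.lowerX (p * b₁) := by
  refine G.raises_of_choose fun i j hi hj => ?_
  rw [G.lowerX_apply hi hj]
  split_ifs with h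
  · exact ValGe.zero
  · refine Or.inr (le_of_eq ?_)
    rw [(G.map_choose_mul hi (show j - 1 < p by omega)).2, Nat.cast_pred (by omega)]
    ring

lemma raises_lowerY (G : GeneratorPair (F := F) p v w b₁ b₂ X Y) : Raises w G.lowerY b₂ := by
  refine G.raises_of_choose fun i j hi hj => ?_
  rw [G.lowerY_apply hi hj]
  split_ifs with h
  · exact ValGe.zero
  · refine Or.inr (le_of_eq ?_)
    rw [(G.map_choose_mul (show i - 1 < p by omega) hj).2, Nat.cast_pred (by omega)]
    ring

/-- Operators congruent to the lowering operators have the expected effect on elements of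
valuation `b₂`. -/
lemma map_apply_of_congr (G : GeneratorPair (F := F) p v w b₁ b₂ X Y) {Ψ₁ Ψ₂ : Module.End F L}
    (h₁ : Raises w (Ψ₁ - G.lowerX) (p * b₁ + 1)) (h₂ : Raises w (Ψ₂ - G.lowerY) (b₂ + 1))
    {ρ : L} (hρ0 : ρ ≠ 0) (hρ : w ρ = b₂) {s t : ℕ} (hs : s < p) (ht : t < p) :
    (Ψ₂ ^ t * Ψ₁ ^ s) ρ ≠ 0 ∧ w ((Ψ₂ ^ t * Ψ₁ ^ s) ρ) = b₂ + t * b₂ + s * (p * b₁) := by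
  have hw := G.top
  have hp := G.prime.pos
  have hΨ₁ : Raises w Ψ₁ (p * b₁) := by
    simpa using (h₁.mono (by omega)).add hw G.raises_lowerX
  have hΨ₂ : Raises w Ψ₂ b₂ := by simpa using (h₂.mono (by omega)).add hw G.raises_lowerY
  have hcongr : Raises w (Ψ₂ ^ t * Ψ₁ ^ s - G.lowerY ^ t * G.lowerX ^ s)
      (t * b₂ + s * (p * b₁) + 1) :=
    Raises.mul_sub_mul hw (Raises.pow_sub_pow hw hΨ₂ G.raises_lowerY h₂ t)
      (G.raises_lowerY.pow t) (hΨ₁.pow s) (Raises.pow_sub_pow hw hΨ₁ G.raises_lowerX h₁ s)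
      (by linarith) (by linarith)
  set k : Fin p × Fin p := (⟨p - 1, by omega⟩, ⟨p - 1, by omega⟩) with hk
  have hsum := G.basis.sum_repr ρ
  rw [← Finset.add_sum_erase _ _ (Finset.mem_univ k)] at hsum
  set rest := ∑ i ∈ Finset.univ.erase k, G.basis.repr ρ i • G.basis i with hrest
  set c := G.basis.repr ρ k with hc
  have hterm : ∀ i, ValGe w b₂ (G.basis.repr ρ i • G.basis i) := fun i =>
    G.incongruentVal_basis.valGe_of_valGe_sum G.ramified hw
      (by rw [G.basis.sum_repr]; exact Or.inr hρ.ge) i (Finset.mem_univ i)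
  have hbk : G.basis k = Ring.choose Y (p - 1) * Ring.choose X (p - 1) := by rw [coe_basis]
  have hcast : ((p - 1 : ℕ) : ℤ) = p - 1 := by omega
  have hvk : w (G.basis k) = -(((p : ℤ) - 1) * b₂ + (p - 1) * (p * b₁)) := by
    rw [hbk, (G.map_choose_mul (by omega) (by omega)).2, hcast]
  have hdvdk : (p : ℤ) ^ 2 ∣ b₂ - w (G.basis k) := by
    obtain ⟨d, hd⟩ := G.dvd_sub
    refine ⟨p * d + b₁, ?_⟩
    rw [hvk]
    linear_combination (p : ℤ) * hd
  have hrest1 : ValGe w (b₂ + 1) rest := by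
    refine hw.valGe_sum fun i hi => ?_
    rcases hterm i with h | h
    · exact Or.inl h
    refine (eq_or_ne (G.basis.repr ρ i • G.basis i) 0).imp id fun hne => lt_of_le_of_ne h ?_
    intro heq
    refine Finset.ne_of_mem_erase hi (G.incongruentVal_basis.eq_of_dvd i k ?_)
    rw [G.ramified.map_smul hw (left_ne_zero_of_smul hne) (right_ne_zero_of_smul hne)] at heq
    obtain ⟨d, hd⟩ := hdvdk
    exact ⟨d - v (G.basis.repr ρ i), by linarith⟩
  have hc0 : c ≠ 0 := by
    intro h0
    rw [h0, zero_smul, zero_add] at hsum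
    rw [hsum] at hrest1
    have := hrest1.le hρ0
    omega
  have hvc : (p : ℤ) ^ 2 * v c + w (G.basis k) = b₂ := by
    have hne : c • G.basis k ≠ 0 := smul_ne_zero hc0 (G.incongruentVal_basis.ne_zero k)
    rw [← G.ramified.map_smul hw hc0 (G.incongruentVal_basis.ne_zero k)]
    refine le_antisymm ?_ ((hterm k).le hne)
    by_contra! hlt
    have h : ValGe w (b₂ + 1) ρ := by
      rw [← hsum]
      exact hw.valGe_add (Or.inr hlt) hrest1
    have := h.le hρ0
    omega
  have hlow : (G.lowerY ^ t * G.lowerX ^ s) (c • G.basis k) =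
      c • (Ring.choose Y (p - 1 - t) * Ring.choose X (p - 1 - s)) := by
    rw [_root_.map_smul, hbk, Module.End.mul_apply, G.lowerX_pow_apply (by omega) (by omega),
      if_neg (by omega), G.lowerY_pow_apply (by omega) (by omega), if_neg (by omega)]
  obtain ⟨hne, hval⟩ := G.map_choose_mul (show p - 1 - t < p by omega) (show p - 1 - s < p by omega)
  have hcast' : ∀ n : ℕ, n < p → ((p - 1 - n : ℕ) : ℤ) = p - 1 - n := fun n hn => by omega
  rw [hcast' t ht, hcast' s hs] at hval
  have hmain0 := smul_ne_zero hc0 hne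
  have hmain : w (c • (Ring.choose Y (p - 1 - t) * Ring.choose X (p - 1 - s))) =
      b₂ + t * b₂ + s * (p * b₁) := by
    rw [G.ramified.map_smul hw hc0 hne, hval]
    linarith
  have hsplit : (Ψ₂ ^ t * Ψ₁ ^ s) ρ =
      c • (Ring.choose Y (p - 1 - t) * Ring.choose X (p - 1 - s)) +
        ((G.lowerY ^ t * G.lowerX ^ s) rest +
          (Ψ₂ ^ t * Ψ₁ ^ s - G.lowerY ^ t * G.lowerX ^ s) ρ) := by
    rw [← hlow, ← add_assoc, ← map_add, hsum, LinearMap.sub_apply]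
    abel
  have herr := hw.map_add_of_valGe hmain0
    (y := (G.lowerY ^ t * G.lowerX ^ s) rest +
      (Ψ₂ ^ t * Ψ₁ ^ s - G.lowerY ^ t * G.lowerX ^ s) ρ) (by
    rw [hmain]
    refine hw.valGe_add ?_ ((hcongr ρ b₂ (Or.inr hρ.ge)).mono (by linarith))
    exact (((G.raises_lowerY.pow t).mul (G.raises_lowerX.pow s)) rest _ hrest1).mono
      (by linarith))
  rw [hsplit]
  exact ⟨herr.1, herr.2.trans hmain⟩

end GeneratorPair

end Scaffold

section NearShift

variable {F L : Type*} [Field F] [Field L] [Algebra F L]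
  {p : ℕ} {v : F → ℤ} {w : L → ℤ} {b₁ b₂ m : ℤ} {X Y : L} {σ : L ≃ₐ[F] L} {μ : F}

lemma ring_choose_add_one {K : Type*} [Field K] [CharZero K] (x : K) (n : ℕ) :
    Ring.choose (x + 1) n = Ring.choose x n + if n = 0 then 0 else Ring.choose x (n - 1) := by
  rcases n with _ | n
  · simp
  · rw [Ring.choose_succ_succ, if_neg n.succ_ne_zero, add_comm, Nat.add_sub_cancel]

lemma algEquiv_toLinearMap_pow (σ : L ≃ₐ[F] L) (n : ℕ) :
    ((σ ^ n).toLinearMap : Module.End F L) = (σ.toLinearMap : Module.End F L) ^ n := by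
  induction n with
  | zero => rfl
  | succ n ih =>
    rw [pow_succ, pow_succ, ← ih]
    rfl

/-- An automorphism of order dividing `p ^ 2` which, up to small errors, moves `X` to `X + 1` and
`Y` to `Y - μ`, while its `p`-th power fixes `X` and moves `Y` to `Y + 1`. -/
structure NearShift (p : ℕ) (v : F → ℤ) (w : L → ℤ) (b₁ b₂ m : ℤ) (X Y : L) (σ : L ≃ₐ[F] L)
    (μ : F) : Prop where
  generators : GeneratorPair (F := F) p v w b₁ b₂ X Y
  m_pos : 0 < m
  eq_add : b₂ = (p : ℤ) ^ 2 * m + b₁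
  valGe_μ : ValGe v (-m) μ
  valGe_X : ValGe w 1 (σ X - (X + 1))
  valGe_Y : ValGe w (-b₂ + p * b₁ + 1) (σ Y + algebraMap F L μ - Y)
  pow_X : (σ ^ p) X = X
  valGe_pow_Y : ValGe w (p * b₁) ((σ ^ p) Y - (Y + 1))
  pow_sq : σ ^ p ^ 2 = 1
  lt_sq_mul : ((p : ℤ) ^ 2 - 1) * b₁ < (p : ℤ) ^ 2 * m
  lt_map_prime : (p + 1) * ((p : ℤ) ^ 2 * m) + 2 * b₁ < w (p : L)

namespace NearShift

/-- The operator `σ ^ p - 1`. -/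
noncomputable def second (p : ℕ) (σ : L ≃ₐ[F] L) : Module.End F L :=
  (σ.toLinearMap : Module.End F L) ^ p - 1

lemma valGe_X' (N : NearShift p v w b₁ b₂ m X Y σ μ) : ValGe w (-(p * b₁)) X :=
  Or.inr N.generators.map_X.ge

lemma valGe_Y' (N : NearShift p v w b₁ b₂ m X Y σ μ) : ValGe w (-b₂) Y :=
  Or.inr N.generators.map_Y.ge

lemma commute_toLinearMap_second (p : ℕ) (σ : L ≃ₐ[F] L) :
    Commute (σ.toLinearMap : Module.End F L) (second p σ) :=
  ((Commute.refl _).pow_right p).sub_right (Commute.one_right _)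

variable [CharZero F]

/-- The truncated binomial series `∑ k < p, (μ choose k) • A ^ k`. -/
noncomputable def truncatedPow (p : ℕ) (μ : F) (A : Module.End F L) : Module.End F L :=
  ∑ k ∈ Finset.range p, Ring.choose μ k • A ^ k

/-- The operator `σ * (σ ^ p) ^ [μ] - 1`. -/
noncomputable def first (p : ℕ) (σ : L ≃ₐ[F] L) (μ : F) : Module.End F L :=
  (σ.toLinearMap : Module.End F L) * truncatedPow p μ (second p σ) - 1

lemma valGe_choose_μ (N : NearShift p v w b₁ b₂ m X Y σ μ) {k : ℕ} (hk : k < p) :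
    ValGe v (-(k * m)) (Ring.choose μ k) :=
  N.generators.base.valGe_choose N.generators.prime N.generators.one_le_map_prime N.m_pos.le
    N.valGe_μ hk

lemma commute_truncatedPow {A B : Module.End F L} (h : Commute A B) (p : ℕ) (μ : F) :
    Commute A (truncatedPow p μ B) :=
  Commute.sum_right _ _ _ fun k _ => (h.pow_right k).smul_right _

lemma truncatedPow_eq_one_add {p : ℕ} (hp : 0 < p) (μ : F) (A : Module.End F L) :
    truncatedPow p μ A = 1 + A * ∑ k ∈ Finset.range (p - 1), Ring.choose μ (k + 1) • A ^ k := by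
  obtain ⟨n, rfl⟩ : ∃ n, p = n + 1 := ⟨p - 1, by omega⟩
  rw [truncatedPow, Finset.sum_range_succ', add_comm, Nat.add_sub_cancel, Finset.mul_sum]
  simp [pow_succ']

lemma commute_second_first (p : ℕ) (σ : L ≃ₐ[F] L) (μ : F) :
    Commute (second p σ) (first p σ μ) :=
  ((commute_toLinearMap_second p σ).symm.mul_right
    (commute_truncatedPow (Commute.refl _) p μ)).sub_right (Commute.one_right _)

variable [CharZero L]

lemma raises_algEquiv (N : NearShift p v w b₁ b₂ m X Y σ μ) :
    Raises w (σ.toLinearMap : Module.End F L) 0 := fun x s hx => by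
  rw [add_zero]
  exact N.generators.valGe_algEquiv σ hx

lemma raises_second_sub (N : NearShift p v w b₁ b₂ m X Y σ μ) :
    Raises w (second p σ - N.generators.lowerY) (b₂ + p * b₁) := by
  have G := N.generators
  have := G.pos
  have := G.lt
  have hp := G.mul_pos
  refine G.raises_of_choose fun i j hi hj => ?_
  have h : (second p σ - N.generators.lowerY) (Ring.choose Y i * Ring.choose X j) =
      (Ring.choose ((σ ^ p) Y) i - Ring.choose (Y + 1) i) * Ring.choose X j := by
    rw [LinearMap.sub_apply, G.lowerY_apply hi hj, second, ← algEquiv_toLinearMap_pow,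
      LinearMap.sub_apply, AlgEquiv.toLinearMap_apply, map_mul, Ring.map_choose, Ring.map_choose,
      N.pow_X, ring_choose_add_one, Module.End.one_apply]
    split_ifs <;> ring
  rw [h]
  have hY1 : ValGe w (-b₂) (Y + 1) :=
    G.top.valGe_add N.valGe_Y' (G.top.valGe_one.mono (by omega))
  refine (G.top.valGe_mul (G.top.valGe_choose_sub G.prime G.one_le_map_prime_top (s := b₂)
    (by omega) (G.valGe_algEquiv (σ ^ p) N.valGe_Y') hY1 N.valGe_pow_Y hi)
    (G.top.valGe_choose G.prime G.one_le_map_prime_top hp.le N.valGe_X' hj)).mono (le_of_eq ?_)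
  ring

lemma raises_second (N : NearShift p v w b₁ b₂ m X Y σ μ) : Raises w (second p σ) b₂ := by
  have hp := N.generators.mul_pos
  simpa using (N.raises_second_sub.mono (by omega : b₂ ≤ _)).add N.generators.top
    N.generators.raises_lowerY

lemma raises_truncatedPow_sub (N : NearShift p v w b₁ b₂ m X Y σ μ) :
    Raises w (truncatedPow p μ (second p σ) - truncatedPow p μ N.generators.lowerY)
      (b₁ + p * b₁) := by
  have G := N.generators
  have hpos := G.pos
  rw [truncatedPow, truncatedPow, ← Finset.sum_sub_distrib]
  refine Raises.sum G.top fun k hk => ?_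
  rw [Finset.mem_range] at hk
  have hsub : Ring.choose μ k • second p σ ^ k - Ring.choose μ k • N.generators.lowerY ^ k =
    Ring.choose μ k • (second p σ ^ k - N.generators.lowerY ^ k) := (smul_sub _ _ _).symm
  rw [hsub]
  rcases Nat.eq_zero_or_pos k with rfl | hk0
  · simpa using Raises.zero
  refine (Raises.smul G.top G.sq_pos G.ramified (N.valGe_choose_μ hk)
    (Raises.pow_sub_pow G.top N.raises_second G.raises_lowerY N.raises_second_sub k)).mono ?_
  rw [N.eq_add]
  have : (1 : ℤ) ≤ k := by exact_mod_cast hk0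
  nlinarith

lemma truncatedPow_lowerY_apply (G : GeneratorPair (F := F) p v w b₁ b₂ X Y) (μ : F) {i j : ℕ}
    (hi : i < p) (hj : j < p) :
    truncatedPow p μ G.lowerY (Ring.choose Y i * Ring.choose X j) =
      Ring.choose (Y + algebraMap F L μ) i * Ring.choose X j := by
  rw [add_comm Y, Ring.add_choose_eq i (Commute.all _ _),
    Finset.Nat.sum_antidiagonal_eq_sum_range_succ
      (fun k l => Ring.choose (algebraMap F L μ) k * Ring.choose Y l), Finset.sum_mul,
    truncatedPow, LinearMap.sum_apply]
  symm
  refine Finset.sum_subset_zero_on_sdiff (Finset.range_mono hi) (fun k hk => ?_) fun k hk => ?_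
  · rw [Finset.mem_sdiff, Finset.mem_range, Finset.mem_range] at hk
    rw [LinearMap.smul_apply, G.lowerY_pow_apply hi hj, if_pos (by omega), smul_zero]
  · rw [Finset.mem_range] at hk
    rw [LinearMap.smul_apply, G.lowerY_pow_apply hi hj, if_neg (by omega), Algebra.smul_def,
      Ring.map_choose, mul_assoc]

lemma raises_first_sub (N : NearShift p v w b₁ b₂ m X Y σ μ) :
    Raises w (first p σ μ - N.generators.lowerX) (p * b₁ + 1) := by
  have G := N.generators
  have hpos := G.pos
  have hlt := G.lt
  have hp := G.mul_pos
  have hsplit : first p σ μ - N.generators.lowerX =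
      ((σ.toLinearMap : Module.End F L) * truncatedPow p μ N.generators.lowerY - 1 -
        N.generators.lowerX) + (σ.toLinearMap : Module.End F L) *
        (truncatedPow p μ (second p σ) - truncatedPow p μ N.generators.lowerY) := by
    rw [first, mul_sub]
    abel
  rw [hsplit]
  refine Raises.add G.top ?_
    ((N.raises_algEquiv.mul N.raises_truncatedPow_sub).mono (by linarith))
  refine G.raises_of_choose fun i j hi hj => ?_
  have h : ((σ.toLinearMap : Module.End F L) * truncatedPow p μ N.generators.lowerY - 1 -
      N.generators.lowerX) (Ring.choose Y i * Ring.choose X j) =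
      (Ring.choose (σ Y + algebraMap F L μ) i - Ring.choose Y i) * Ring.choose (σ X) j +
        Ring.choose Y i * (Ring.choose (σ X) j - Ring.choose (X + 1) j) := by
    rw [LinearMap.sub_apply, LinearMap.sub_apply, G.lowerX_apply hi hj, Module.End.mul_apply,
      truncatedPow_lowerY_apply G μ hi hj, AlgEquiv.toLinearMap_apply, map_mul, Ring.map_choose,
      Ring.map_choose, map_add, AlgEquiv.commutes, ring_choose_add_one, Module.End.one_apply]
    split_ifs <;> ring
  rw [h]
  have hX1 : ValGe w (-(p * b₁)) (X + 1) :=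
    G.top.valGe_add N.valGe_X' (G.top.valGe_one.mono (by omega))
  have hσX := G.valGe_algEquiv σ N.valGe_X'
  have hσY : ValGe w (-b₂) (σ Y + algebraMap F L μ) := by
    have := G.top.valGe_add (N.valGe_Y.mono (by omega : -b₂ ≤ _)) N.valGe_Y'
    rwa [sub_add_cancel] at this
  have hvp := G.one_le_map_prime_top
  refine G.top.valGe_add ?_ ?_
  · refine (G.top.valGe_mul (G.top.valGe_choose_sub G.prime hvp (s := b₂) (by omega) hσY
      N.valGe_Y' N.valGe_Y hi) (G.top.valGe_choose G.prime hvp hp.le hσX hj)).mono (le_of_eq ?_)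
    ring
  · refine (G.top.valGe_mul (G.top.valGe_choose G.prime hvp (by omega) N.valGe_Y' hi)
      (G.top.valGe_choose_sub G.prime hvp hp.le hσX hX1 N.valGe_X hj)).mono (le_of_eq ?_)
    ring

lemma raises_first (N : NearShift p v w b₁ b₂ m X Y σ μ) : Raises w (first p σ μ) (p * b₁) := by
  simpa using (N.raises_first_sub.mono (by omega : p * b₁ ≤ _)).add N.generators.top
    N.generators.raises_lowerX

lemma map_apply (N : NearShift p v w b₁ b₂ m X Y σ μ) {ρ : L} (hρ0 : ρ ≠ 0) (hρ : w ρ = b₂)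
    {s t : ℕ} (hs : s < p) (ht : t < p) :
    (second p σ ^ t * first p σ μ ^ s) ρ ≠ 0 ∧
      w ((second p σ ^ t * first p σ μ ^ s) ρ) = b₂ + t * b₂ + s * (p * b₁) :=
  N.generators.map_apply_of_congr N.raises_first_sub
    (N.raises_second_sub.mono (by linarith [N.generators.mul_pos])) hρ0 hρ hs ht

lemma raises_second_pow (N : NearShift p v w b₁ b₂ m X Y σ μ) :
    Raises w (second p σ ^ p) (w (p : L) + b₂) := by
  have G := N.generators
  have h := Raises.one_add_pow_sub G.top G.prime (by linarith [G.pos, G.lt]) N.raises_second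
  have h1 : (1 + second p σ) ^ p = 1 := by
    rw [second, add_sub_cancel, ← pow_mul, ← sq, ← algEquiv_toLinearMap_pow, N.pow_sq]
    rfl
  rw [h1, sub_self, zero_sub] at h
  simpa using h.neg G.top

/-- The `p`-th power of the first operator is congruent to the second operator. -/
lemma raises_first_pow_sub (N : NearShift p v w b₁ b₂ m X Y σ μ) :
    Raises w (first p σ μ ^ p - second p σ) (2 * b₂) := by
  have G := N.generators
  have hpos := G.pos
  have hw := G.top
  have hpp := G.mul_pos
  have hb := N.eq_add
  have hM := mul_pos G.sq_pos N.m_pos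
  have hbig := N.lt_map_prime
  have hp2 : (2 : ℤ) ≤ p := by exact_mod_cast G.prime.two_le
  set M := (p : ℤ) ^ 2 * m with hMdef
  set A := second p σ with hA
  set Q := ∑ k ∈ Finset.range (p - 1), Ring.choose μ (k + 1) • A ^ k with hQ
  have hAQ : Commute A Q :=
    Commute.sum_right _ _ _ fun k _ => ((Commute.refl A).pow_right k).smul_right _
  have hraisesQ : Raises w Q (-M) := by
    refine Raises.sum hw fun k hk => ?_
    rw [Finset.mem_range] at hk
    refine (Raises.smul hw G.sq_pos G.ramified (N.valGe_choose_μ (k := k + 1) (by omega))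
      (N.raises_second.pow k)).mono ?_
    rw [hb, hMdef]
    push_cast
    nlinarith [Int.natCast_nonneg k]
  have hU : Raises w (A * Q) 0 := (N.raises_second.mul hraisesQ).mono (by linarith)
  have hE := truncatedPow_eq_one_add G.prime.pos μ A
  have hraisesE : Raises w (truncatedPow p μ A ^ p - 1) (2 * b₂) := by
    have h1 := Raises.one_add_pow_sub hw G.prime le_rfl hU
    have h2 : Raises w ((A * Q) ^ p) (2 * b₂) := by
      rw [hAQ.mul_pow]
      refine (N.raises_second_pow.mul (hraisesQ.pow p)).mono ?_
      nlinarith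
    have h3 := (h1.mono (by nlinarith : 2 * b₂ ≤ _)).add hw h2
    rwa [sub_add_cancel, ← hE] at h3
  have hpow : (1 + first p σ μ) ^ p = (1 + A) * truncatedPow p μ A ^ p := by
    rw [first, add_sub_cancel, (commute_truncatedPow (commute_toLinearMap_second p σ) p μ).mul_pow,
      hA, second, add_sub_cancel]
  have hsplit : first p σ μ ^ p - A = (1 + A) * (truncatedPow p μ A ^ p - 1) -
      ((1 + first p σ μ) ^ p - 1 - first p σ μ ^ p) := by
    rw [hpow, mul_sub, mul_one]
    abel
  rw [hsplit]
  have h1A : Raises w (1 + A) 0 := Raises.one.add hw (N.raises_second.mono (by linarith))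
  refine ((h1A.mul hraisesE).mono (by linarith)).sub hw
    ((Raises.one_add_pow_sub hw G.prime hpp.le N.raises_first).mono ?_)
  nlinarith

end NearShift

end NearShift

section WittExtension

lemma IsDiscVal.mul_map_of_pow_sub_self {K : Type*} [Field K] {v : K → ℤ} (hv : IsDiscVal v)
    {p : ℕ} (hp : p.Prime) {x a : K} (ha : v a < 0) (ha0 : a ≠ 0) (h : x ^ p - x = a) :
    x ≠ 0 ∧ p * v x = v a := by
  have hp2 : (2 : ℤ) ≤ p := by exact_mod_cast hp.two_le
  have hx0 : x ≠ 0 := by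
    rintro rfl
    rw [zero_pow hp.ne_zero, sub_zero] at h
    exact ha0 h.symm
  refine ⟨hx0, ?_⟩
  rcases le_or_gt 0 (v x) with hx | hx
  · have hge : ValGe v 0 (x ^ p - x) :=
      hv.valGe_sub (Or.inr (by rw [hv.map_pow hx0]; positivity)) (Or.inr hx)
    rw [h] at hge
    have := hge.le ha0
    omega
  · have hdom := (hv.map_add_of_valGe (pow_ne_zero p hx0) (y := -x)
      (hv.valGe_neg (Or.inr (by rw [hv.map_pow hx0]; nlinarith)))).2
    rw [← sub_eq_add_neg, h, hv.map_pow hx0] at hdom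
    exact hdom.symm

/-- The map `x ↦ x ^ p - x` is close to `x ↦ -x` near every point of not too negative valuation. -/
lemma IsDiscVal.valGe_of_valGe_sub_pow {K : Type*} [Field K] [CharZero K] {v : K → ℤ}
    (hv : IsDiscVal v) {p : ℕ} (hp : p.Prime) {y z : K} {r s : ℤ} (hs : 0 ≤ s)
    (hvp : ((p : ℤ) - 1) * s < v (p : K)) (hy : ValGe v (-s) y) (hz : ValGe v 1 z)
    (h : ValGe v r (z - ((y + z) ^ p - y ^ p))) : ValGe v r z := by
  have hp2 : (2 : ℤ) ≤ p := by exact_mod_cast hp.two_le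
  rcases eq_or_ne z 0 with rfl | hz0
  · exact ValGe.zero
  by_contra hcon
  have hlt : v z < r := by
    by_contra! hle
    exact hcon (Or.inr hle)
  have hz1 := hz.le hz0
  have hdiff : ValGe v (v z + 1) ((y + z) ^ p - y ^ p) := by
    have heq : (y + z) ^ p - y ^ p = z ^ p - p * wittD p y z := by
      rw [add_pow_eq_sub_wittD hp]
      ring
    rw [heq]
    refine hv.valGe_sub (Or.inr (by rw [hv.map_pow hz0]; nlinarith)) ?_
    exact (hv.valGe_mul (Or.inr le_rfl) (hv.valGe_wittD hp (t := -v z) (by omega) hy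
      (Or.inr (by omega)))).mono (by omega)
  have hge := hv.valGe_add (h.mono (by omega : v z + 1 ≤ r)) hdiff
  rw [sub_add_cancel] at hge
  have := hge.le hz0
  omega

variable {F L : Type*} [Field F] [Field L] [Algebra F L]
  {p : ℕ} {v : F → ℤ} {w : L → ℤ} {b m : ℤ} {a μ : F} {x₁ x₂ ε δ : L} {σ : L ≃ₐ[F] L}

/-- A totally ramified extension of degree `p ^ 2` containing the solutions `x₁`, `x₂` of the
Witt vector equations attached to `a` and `μ ^ p * a`, together with an automorphism `σ`. -/
structure WittExtension (p : ℕ) (v : F → ℤ) (w : L → ℤ) (b m : ℤ) (a μ : F) (x₁ x₂ ε δ : L)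
    (σ : L ≃ₐ[F] L) : Prop where
  prime : p.Prime
  base : IsDiscVal v
  top : IsDiscVal w
  ramified : RamifiedOver v w ((p : ℤ) ^ 2)
  finrank_eq : Module.finrank F L = p ^ 2
  one_le_map_prime : 1 ≤ v (p : F)
  a_ne_zero : a ≠ 0
  map_a : v a = -b
  b_pos : 0 < b
  not_dvd : ¬ (p : ℤ) ∣ b
  μ_ne_zero : μ ≠ 0
  map_μ : v μ = -m
  m_pos : 0 < m
  lt_sq_mul : ((p : ℤ) ^ 2 - 1) * b < (p : ℤ) ^ 2 * m
  lt_map_prime : (p + 1) * ((p : ℤ) ^ 2 * m) + 2 * b < w (p : L)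
  eq_x₁ : x₁ ^ p - x₁ = algebraMap F L a
  eq_x₂ : x₂ ^ p - x₂ = algebraMap F L (μ ^ p * a) + wittD p x₁ (algebraMap F L a)
  apply_x₁ : σ x₁ = x₁ + 1 + ε
  valGe_ε : ValGe w (w (p : L) - p * (p - 1) * b) ε
  apply_x₂ : σ x₂ = x₂ + wittD p x₁ 1 + δ
  valGe_δ : ValGe w 1 δ
  pow_sq : σ ^ p ^ 2 = 1

namespace WittExtension

lemma map_algebraMap_a (W : WittExtension p v w b m a μ x₁ x₂ ε δ σ) :
    algebraMap F L a ≠ 0 ∧ w (algebraMap F L a) = -((p : ℤ) ^ 2 * b) := by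
  refine ⟨by simpa using W.a_ne_zero, ?_⟩
  rw [W.ramified _ W.a_ne_zero, W.map_a]
  ring

lemma map_algebraMap_μ (W : WittExtension p v w b m a μ x₁ x₂ ε δ σ) :
    algebraMap F L μ ≠ 0 ∧ w (algebraMap F L μ) = -((p : ℤ) ^ 2 * m) := by
  refine ⟨by simpa using W.μ_ne_zero, ?_⟩
  rw [W.ramified _ W.μ_ne_zero, W.map_μ]
  ring

lemma two_le (W : WittExtension p v w b m a μ x₁ x₂ ε δ σ) : (2 : ℤ) ≤ p := by
  exact_mod_cast W.prime.two_le

/-- A lower bound for the absolute ramification index in terms of `b`. -/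
lemma mul_lt_map_prime (W : WittExtension p v w b m a μ x₁ x₂ ε δ σ) :
    (p + 1) * (((p : ℤ) ^ 2 - 1) * b) + 2 * b < w (p : L) := by
  nlinarith [W.lt_map_prime, W.lt_sq_mul, W.two_le]

lemma map_x₁ (W : WittExtension p v w b m a μ x₁ x₂ ε δ σ) : x₁ ≠ 0 ∧ w x₁ = -(p * b) := by
  have hp2 := W.two_le
  obtain ⟨ha0, ha⟩ := W.map_algebraMap_a
  obtain ⟨h0, h⟩ := W.top.mul_map_of_pow_sub_self W.prime
    (by rw [ha]; nlinarith [W.b_pos]) ha0 W.eq_x₁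
  refine ⟨h0, mul_left_cancel₀ (by omega : (p : ℤ) ≠ 0) ?_⟩
  rw [h, ha]
  ring

lemma valGe_x₁ (W : WittExtension p v w b m a μ x₁ x₂ ε δ σ) : ValGe w (-(p * b)) x₁ :=
  Or.inr W.map_x₁.2.ge

lemma valGe_μ_mul_x₁ (W : WittExtension p v w b m a μ x₁ x₂ ε δ σ) :
    ValGe w (-((p : ℤ) ^ 2 * m + p * b)) (algebraMap F L μ * x₁) :=
  (W.top.valGe_mul (Or.inr W.map_algebraMap_μ.2.ge) W.valGe_x₁).mono (by linarith)

variable [CharZero L]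

lemma valGe_wittD_x₁_one (W : WittExtension p v w b m a μ x₁ x₂ ε δ σ) :
    ValGe w (-(((p : ℤ) - 1) * (p * b))) (wittD p x₁ 1) := by
  have := W.two_le
  have := W.b_pos
  simpa using W.top.valGe_wittD W.prime (t := 0) (by positivity) W.valGe_x₁
    (by simpa using W.top.valGe_one)

lemma sub_mul_pow_eq (W : WittExtension p v w b m a μ x₁ x₂ ε δ σ) :
    (x₂ - algebraMap F L μ * x₁) ^ p - (x₂ - algebraMap F L μ * x₁) -
        p * wittD p (x₂ - algebraMap F L μ * x₁) (algebraMap F L μ * x₁) =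
      -(algebraMap F L μ ^ p * x₁) +
        (algebraMap F L μ * x₁ + wittD p x₁ (algebraMap F L a)) := by
  have h := add_pow_eq_sub_wittD W.prime (x₂ - algebraMap F L μ * x₁) (algebraMap F L μ * x₁)
  rw [sub_add_cancel, mul_pow] at h
  have h2 := W.eq_x₂
  rw [map_mul, map_pow] at h2
  linear_combination h2 - h - algebraMap F L μ ^ p * W.eq_x₁

lemma map_sub_mul (W : WittExtension p v w b m a μ x₁ x₂ ε δ σ) :
    x₂ - algebraMap F L μ * x₁ ≠ 0 ∧
      w (x₂ - algebraMap F L μ * x₁) = -((p : ℤ) ^ 2 * m + b) := by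
  have hw := W.top
  have hp2 := W.two_le
  have hb := W.b_pos
  have hM := W.lt_sq_mul
  have hE := W.lt_map_prime
  have hEb := W.mul_lt_map_prime
  have hpb : 0 < p * b := by positivity
  obtain ⟨hx0, hx⟩ := W.map_x₁
  obtain ⟨hμ0, hμ⟩ := W.map_algebraMap_μ
  have heq := W.sub_mul_pow_eq
  have hmul := W.valGe_μ_mul_x₁
  set M := (p : ℤ) ^ 2 * m
  set z := x₂ - algebraMap F L μ * x₁
  have hMb : b ≤ M := by nlinarith
  have hlead0 : -(algebraMap F L μ ^ p * x₁) ≠ 0 :=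
    neg_ne_zero.2 (mul_ne_zero (pow_ne_zero p hμ0) hx0)
  have hlead : w (-(algebraMap F L μ ^ p * x₁)) = -(p * (M + b)) := by
    rw [hw.map_neg, hw.map_mul _ _ (pow_ne_zero p hμ0) hx0, hw.map_pow hμ0, hμ, hx]
    ring
  have hD : ValGe w (-((p - 1) * ((p : ℤ) ^ 2 * b) + p * b)) (wittD p x₁ (algebraMap F L a)) := by
    rw [wittD_comm]
    exact hw.valGe_wittD W.prime (by nlinarith) (Or.inr W.map_algebraMap_a.2.ge) W.valGe_x₁
  have hrhs := hw.map_add_of_valGe hlead0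
    (y := algebraMap F L μ * x₁ + wittD p x₁ (algebraMap F L a)) (by
      rw [hlead]
      refine hw.valGe_add (hmul.mono (by nlinarith)) (hD.mono ?_)
      have : (p : ℤ) * (((p : ℤ) ^ 2 - 1) * b) + p ≤ p * M := by nlinarith
      nlinarith)
  rw [hlead, ← heq] at hrhs
  obtain ⟨hne, hval⟩ := hrhs
  have hEp : (p : ℤ) * (p * b) + 1 ≤ w (p : L) := by nlinarith
  by_cases hsmall : ValGe w (-(M + b) + 1) z
  · exfalso
    have hge : ValGe w (-(p * (M + b)) + 1)
        (z ^ p - z - p * wittD p z (algebraMap F L μ * x₁)) := by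
      refine hw.valGe_sub (hw.valGe_sub ((hw.valGe_pow hsmall p).mono (by nlinarith))
        (hsmall.mono (by nlinarith))) ?_
      refine (hw.valGe_mul (Or.inr le_rfl) (hw.valGe_wittD W.prime (s := M + b + p * b)
        (t := M + b + p * b) le_rfl (hsmall.mono (by linarith))
        (hmul.mono (by linarith)))).mono ?_
      linarith
    have := hge.le hne
    omega
  · have hz0 : z ≠ 0 := fun h0 => hsmall (Or.inl h0)
    have hle : w z ≤ -(M + b) := by
      by_contra! hlt
      exact hsmall (Or.inr hlt)
    refine ⟨hz0, ?_⟩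
    have hzp : w (z ^ p) = p * w z := hw.map_pow hz0 p
    have hrest : ValGe w (w (z ^ p) + 1) (-z - p * wittD p z (algebraMap F L μ * x₁)) := by
      rw [hzp]
      refine hw.valGe_sub (hw.valGe_neg (Or.inr (by nlinarith))) ?_
      refine (hw.valGe_mul (Or.inr le_rfl) (hw.valGe_wittD W.prime (s := -w z + p * b)
        (t := -w z + p * b) le_rfl (Or.inr (by linarith)) (hmul.mono (by linarith)))).mono ?_
      linarith
    have hdom := (hw.map_add_of_valGe (pow_ne_zero p hz0) hrest).2
    rw [← add_sub_assoc, ← sub_eq_add_neg, hval, hzp] at hdom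
    have : (p : ℤ) * (w z + (M + b)) = 0 := by linarith
    rcases mul_eq_zero.1 this with h | h <;> linarith

lemma valGe_x₂ (W : WittExtension p v w b m a μ x₁ x₂ ε δ σ) :
    ValGe w (-((p : ℤ) ^ 2 * m + p * b)) x₂ := by
  have h : ValGe w (-((p : ℤ) ^ 2 * m + p * b)) (x₂ - algebraMap F L μ * x₁) := by
    refine Or.inr ?_
    rw [W.map_sub_mul.2]
    nlinarith [W.two_le, W.b_pos]
  simpa using W.top.valGe_add h W.valGe_μ_mul_x₁

lemma generatorPair (W : WittExtension p v w b m a μ x₁ x₂ ε δ σ) :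
    GeneratorPair (F := F) p v w b ((p : ℤ) ^ 2 * m + b) x₁ (x₂ - algebraMap F L μ * x₁) where
  prime := W.prime
  base := W.base
  top := W.top
  ramified := W.ramified
  finrank_eq := W.finrank_eq
  one_le_map_prime := W.one_le_map_prime
  pos := W.b_pos
  lt := by nlinarith [W.m_pos, W.two_le]
  not_dvd := W.not_dvd
  dvd_sub := ⟨m, by ring⟩
  X_ne_zero := W.map_x₁.1
  map_X := W.map_x₁.2
  Y_ne_zero := W.map_sub_mul.1
  map_Y := W.map_sub_mul.2

/-- The automorphism `σ` moves `x₂` to `x₂ + wittD p x₁ 1` up to an error of valuation at least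
`p * b`. -/
lemma valGe_δ_mul (W : WittExtension p v w b m a μ x₁ x₂ ε δ σ) : ValGe w (p * b) δ := by
  have hw := W.top
  have hp2 := W.two_le
  have hb := W.b_pos
  have hM := W.lt_sq_mul
  have hE := W.lt_map_prime
  have hEb := W.mul_lt_map_prime
  have hpb : 0 < p * b := by positivity
  have hx₁ := W.valGe_x₁
  have hx₂ := W.valGe_x₂
  have hD₁ := W.valGe_wittD_x₁_one
  set M := (p : ℤ) ^ 2 * m
  have hMp : ((p : ℤ) - 1) * (p * b) ≤ M := by nlinarith
  refine hw.valGe_of_valGe_sub_pow W.prime (y := x₂ + wittD p x₁ 1) (s := M + p * b)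
    (by nlinarith) (by nlinarith) (hw.valGe_add hx₂ (hD₁.mono (by linarith))) W.valGe_δ ?_
  have heq : δ - ((x₂ + wittD p x₁ 1 + δ) ^ p - (x₂ + wittD p x₁ 1) ^ p) =
      (wittD p x₁ 1 ^ p - wittD p (x₁ ^ p) 1) - p * wittD p x₂ (wittD p x₁ 1) -
        (wittD p (x₁ + 1 + ε) (algebraMap F L a) - wittD p (x₁ + 1) (algebraMap F L a)) := by
    have hσ : (x₂ + wittD p x₁ 1 + δ) ^ p - (x₂ + wittD p x₁ 1 + δ) =
        algebraMap F L (μ ^ p * a) + wittD p (x₁ + 1 + ε) (algebraMap F L a) := by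
      have h := congrArg σ W.eq_x₂
      rw [wittD] at h
      simp only [map_sub, map_pow, map_add, map_div₀, map_natCast, AlgEquiv.commutes,
        W.apply_x₁, W.apply_x₂] at h
      exact h
    have hcoc := wittD_cocycle (p := p) x₁ (algebraMap F L a) 1
    have hx1p : x₁ + algebraMap F L a = x₁ ^ p := by rw [← W.eq_x₁]; ring
    rw [hx1p] at hcoc
    have hy := add_pow_eq_sub_wittD W.prime x₂ (wittD p x₁ 1)
    linear_combination hy + W.eq_x₂ - hσ + hcoc
  rw [heq]
  refine hw.valGe_sub (hw.valGe_sub ?_ ?_) ?_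
  · refine (hw.valGe_wittD_one_pow_sub W.prime hpb.le hx₁).mono ?_
    nlinarith
  · refine (hw.valGe_mul (Or.inr le_rfl) (hw.valGe_wittD W.prime (by linarith) hx₂ hD₁)).mono ?_
    nlinarith
  · have hx1 : ValGe w (-(p * b)) (x₁ + 1) :=
      hw.valGe_add hx₁ (hw.valGe_one.mono (by linarith))
    refine (hw.valGe_wittD_sub W.prime (t := (p : ℤ) ^ 2 * b) (by nlinarith)
      (hw.valGe_add hx1 (W.valGe_ε.mono (by nlinarith))) hx1
      (by simpa using W.valGe_ε) (Or.inr W.map_algebraMap_a.2.ge)).mono ?_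
    nlinarith

lemma pow_apply_x₂_sub (W : WittExtension p v w b m a μ x₁ x₂ ε δ σ) (n : ℕ) :
    (σ ^ n) x₂ - x₂ = ∑ k ∈ Finset.range n, (wittD p ((σ ^ k) x₁) 1 + (σ ^ k) δ) := by
  have h : ∀ k ∈ Finset.range n, wittD p ((σ ^ k) x₁) 1 + (σ ^ k) δ =
      (σ ^ (k + 1)) x₂ - (σ ^ k) x₂ := by
    intro k _
    have hD : wittD p ((σ ^ k) x₁) 1 = (σ ^ k) (wittD p x₁ 1) := by
      simp only [wittD, map_div₀, map_sub, map_add, map_pow, map_one, map_natCast]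
    rw [pow_succ, AlgEquiv.mul_apply, W.apply_x₂, map_add, map_add, hD]
    ring
  rw [Finset.sum_congr rfl h, Finset.sum_range_sub (fun k => (σ ^ k) x₂)]
  rfl

variable [CharZero F]

lemma valGe_pow_apply_x₁ (W : WittExtension p v w b m a μ x₁ x₂ ε δ σ) (k : ℕ) :
    ValGe w (w (p : L) - p * (p - 1) * b) ((σ ^ k) x₁ - (x₁ + k)) := by
  induction k with
  | zero => simpa using ValGe.zero
  | succ k ih =>
    have h : (σ ^ (k + 1)) x₁ - (x₁ + (k + 1 : ℕ)) = σ ((σ ^ k) x₁ - (x₁ + k)) + ε := by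
      rw [pow_succ', AlgEquiv.mul_apply, map_sub, map_add, map_natCast, W.apply_x₁]
      push_cast
      ring
    rw [h]
    exact W.top.valGe_add (W.generatorPair.valGe_algEquiv σ ih) W.valGe_ε

lemma pow_prime_apply_x₁ (W : WittExtension p v w b m a μ x₁ x₂ ε δ σ) : (σ ^ p) x₁ = x₁ := by
  have hw := W.top
  have hp2 := W.two_le
  have hb := W.b_pos
  have hEb := W.mul_lt_map_prime
  have hpb : 0 < p * b := by positivity
  set c := (σ ^ p) x₁ - x₁ with hc
  have hc1 : ValGe w 1 c := by
    have h := hw.valGe_add ((W.valGe_pow_apply_x₁ p).mono (by nlinarith : (1 : ℤ) ≤ _))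
      (y := (p : L)) (Or.inr (by nlinarith))
    rwa [← sub_sub, sub_add_cancel] at h
  have hroot : c - ((x₁ + c) ^ p - x₁ ^ p) = 0 := by
    have h := congrArg (σ ^ p) W.eq_x₁
    rw [AlgEquiv.commutes, ← W.eq_x₁, map_sub, map_pow] at h
    rw [hc, add_sub_cancel]
    linear_combination -h
  have hmem := hw.valGe_of_valGe_sub_pow W.prime (r := w c + 1) hpb.le (by nlinarith) W.valGe_x₁
    hc1 (Or.inl hroot)
  rcases hmem with h0 | h0
  · exact sub_eq_zero.1 h0
  · omega

lemma valGe_pow_prime_apply_x₂ (W : WittExtension p v w b m a μ x₁ x₂ ε δ σ) :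
    ValGe w (p * b) ((σ ^ p) x₂ - x₂ - 1) := by
  have hw := W.top
  have hp2 := W.two_le
  have hb := W.b_pos
  have hEb := W.mul_lt_map_prime
  have hpb : 0 < p * b := by positivity
  have hcube : 0 ≤ (p : ℤ) ^ 2 * (p - 1) * b :=
    mul_nonneg (mul_nonneg (sq_nonneg _) (by linarith)) hb.le
  have hEp : 2 * (((p : ℤ) - 1) * (p * b)) + p * b ≤ w (p : L) := by nlinarith
  have hp1 : 0 ≤ ((p : ℤ) - 1) * (p * b) := mul_nonneg (by linarith) hpb.le
  have hsplit : (σ ^ p) x₂ - x₂ - 1 =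
      ∑ k ∈ Finset.range p, ((wittD p ((σ ^ k) x₁) 1 - wittD p (x₁ + k) 1) + (σ ^ k) δ) +
        (wittD p x₁ p - (p : L) ^ (p - 1)) := by
    have h := sum_wittD_one W.prime x₁
    rw [W.pow_apply_x₂_sub, Finset.sum_add_distrib, Finset.sum_add_distrib,
      Finset.sum_sub_distrib, h]
    ring
  rw [hsplit]
  refine hw.valGe_add (hw.valGe_sum fun k _ => hw.valGe_add ?_
    (W.generatorPair.valGe_algEquiv _ W.valGe_δ_mul)) (hw.valGe_sub ?_ ?_)
  · refine (hw.valGe_wittD_sub W.prime (s := p * b) (t := p * b) le_rfl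
      (W.generatorPair.valGe_algEquiv _ W.valGe_x₁)
      (hw.valGe_add W.valGe_x₁ ((hw.valGe_natCast k).mono (by linarith)))
      (W.valGe_pow_apply_x₁ k) (hw.valGe_one.mono (by linarith))).mono ?_
    linarith
  · refine (hw.valGe_wittD W.prime (t := -w (p : L)) (by linarith) W.valGe_x₁
      (Or.inr (by linarith))).mono ?_
    linarith
  · refine (hw.valGe_pow (Or.inr le_rfl) (p - 1)).mono ?_
    rw [Nat.cast_pred W.prime.pos]
    nlinarith

/-- The automorphism `σ` is a near shift of `x₁` and `x₂ - μ * x₁`. -/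
lemma nearShift (W : WittExtension p v w b m a μ x₁ x₂ ε δ σ) :
    NearShift p v w b ((p : ℤ) ^ 2 * m + b) m x₁ (x₂ - algebraMap F L μ * x₁) σ μ := by
  have hw := W.top
  have hp2 := W.two_le
  have hb := W.b_pos
  have hM := W.lt_sq_mul
  have hE := W.lt_map_prime
  have hEb := W.mul_lt_map_prime
  have hpb : 0 < p * b := by positivity
  refine
    { generators := W.generatorPair
      m_pos := W.m_pos
      eq_add := rfl
      valGe_μ := Or.inr W.map_μ.ge
      valGe_X := ?_
      valGe_Y := ?_
      pow_X := W.pow_prime_apply_x₁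
      valGe_pow_Y := ?_
      pow_sq := W.pow_sq
      lt_sq_mul := W.lt_sq_mul
      lt_map_prime := W.lt_map_prime }
  · rw [W.apply_x₁, add_sub_cancel_left]
    exact W.valGe_ε.mono (by nlinarith)
  · have h : σ (x₂ - algebraMap F L μ * x₁) + algebraMap F L μ - (x₂ - algebraMap F L μ * x₁) =
        wittD p x₁ 1 + δ - algebraMap F L μ * ε := by
      rw [map_sub, map_mul, AlgEquiv.commutes, W.apply_x₁, W.apply_x₂]
      ring
    rw [h]
    refine hw.valGe_sub (hw.valGe_add (W.valGe_wittD_x₁_one.mono ?_)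
      (W.valGe_δ_mul.mono ?_))
      ((hw.valGe_mul (Or.inr W.map_algebraMap_μ.2.ge) W.valGe_ε).mono ?_)
    · nlinarith
    · nlinarith
    · have hcube : 0 ≤ (p : ℤ) ^ 2 * (p - 1) * b :=
        mul_nonneg (mul_nonneg (sq_nonneg _) (by linarith)) hb.le
      nlinarith
  · have h : (σ ^ p) (x₂ - algebraMap F L μ * x₁) - (x₂ - algebraMap F L μ * x₁ + 1) =
        (σ ^ p) x₂ - x₂ - 1 := by
      rw [map_sub, map_mul, AlgEquiv.commutes, W.pow_prime_apply_x₁]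
      ring
    rw [h]
    exact W.valGe_pow_prime_apply_x₂

end WittExtension

end WittExtension

section AssociatedOrder

variable {F L : Type*} [Field F] [Field L] [Algebra F L]

/-- The linear endomorphisms in the span of the automorphism group. -/
def groupAlgebra (F L : Type*) [Field F] [Field L] [Algebra F L] :
    Subalgebra F (Module.End F L) :=
  (Submodule.span F
    {f : Module.End F L | ∃ σ : L ≃ₐ[F] L, f = (σ.toLinearMap : Module.End F L)}).toSubalgebra
    (Submodule.subset_span ⟨1, rfl⟩) (by
      intro f g hf hg
      have h := Submodule.mul_mem_mul hf hg
      rw [Submodule.span_mul_span] at h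
      refine Submodule.span_mono ?_ h
      rintro _ ⟨_, ⟨σ, rfl⟩, _, ⟨τ, rfl⟩, rfl⟩
      exact ⟨σ * τ, rfl⟩)

lemma toLinearMap_mem_groupAlgebra (σ : L ≃ₐ[F] L) :
    (σ.toLinearMap : Module.End F L) ∈ groupAlgebra F L :=
  Submodule.subset_span ⟨σ, rfl⟩

lemma finrank_groupAlgebra_le [IsGalois F L] [FiniteDimensional F L] :
    Module.finrank F (Subalgebra.toSubmodule (groupAlgebra F L)) ≤ Module.finrank F L := by
  have hset : {f : Module.End F L | ∃ σ : L ≃ₐ[F] L, f = (σ.toLinearMap : Module.End F L)} =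
      Set.range fun σ : L ≃ₐ[F] L => (σ.toLinearMap : Module.End F L) := by
    ext f
    exact ⟨fun ⟨σ, h⟩ => ⟨σ, h.symm⟩, fun ⟨σ, h⟩ => ⟨σ, h.symm⟩⟩
  have h := finrank_range_le_card (R := F)
    (fun σ : L ≃ₐ[F] L => (σ.toLinearMap : Module.End F L))
  rw [← IsGalois.card_aut_eq_finrank F L, Nat.card_eq_fintype_card]
  rwa [Set.finrank, ← hset] at h

variable {p : ℕ} {v : F → ℤ} {w : L → ℤ} {b₁ b₂ m : ℤ} {X Y : L} {σ : L ≃ₐ[F] L}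
  {μ : F}

namespace NearShift

/-- The valuation of the monomial with index `a` at an element of valuation `b₂`. -/
def level (p : ℕ) (b₁ b₂ : ℤ) (a : ℕ) : ℤ :=
  (1 + ((a / p : ℕ) : ℤ)) * b₂ + ((a % p : ℕ) : ℤ) * (p : ℤ) * b₁

lemma eq_of_sq_dvd_level_sub (N : NearShift p v w b₁ b₂ m X Y σ μ) {a a' : ℕ} (ha : a < p ^ 2)
    (ha' : a' < p ^ 2) (h : (p : ℤ) ^ 2 ∣ level p b₁ b₂ a - level p b₁ b₂ a') : a = a' := by
  have hp := N.generators.prime.pos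
  rw [sq] at ha ha'
  obtain ⟨h1, h2⟩ := N.generators.eq_of_sq_dvd (Nat.div_lt_of_lt_mul ha) (Nat.mod_lt a hp)
    (Nat.div_lt_of_lt_mul ha') (Nat.mod_lt a' hp) (by
      convert h using 1
      rw [level, level]
      ring)
  rw [← Nat.div_add_mod a p, ← Nat.div_add_mod a' p, h1, h2]

lemma sq_le_M (N : NearShift p v w b₁ b₂ m X Y σ μ) : (p : ℤ) ^ 2 ≤ (p : ℤ) ^ 2 * m := by
  nlinarith [N.m_pos, N.generators.sq_pos]

variable [CharZero F]

/-- The monomials in the two operators, indexed by the digits of `a` in base `p`. -/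
noncomputable def monomial (p : ℕ) (σ : L ≃ₐ[F] L) (μ : F) (a : ℕ) : Module.End F L :=
  second p σ ^ (a / p) * first p σ μ ^ (a % p)

lemma monomial_mem_groupAlgebra (p : ℕ) (σ : L ≃ₐ[F] L) (μ : F) (a : ℕ) :
    monomial p σ μ a ∈ groupAlgebra F L := by
  have hσ := toLinearMap_mem_groupAlgebra σ
  have hsecond : second p σ ∈ groupAlgebra F L := sub_mem (pow_mem hσ p) (one_mem _)
  have hfirst : first p σ μ ∈ groupAlgebra F L :=
    sub_mem (mul_mem hσ (sum_mem fun k _ =>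
      Subalgebra.smul_mem _ (pow_mem hsecond k) _)) (one_mem _)
  exact mul_mem (pow_mem hsecond _) (pow_mem hfirst _)

lemma monomial_mul_monomial (p : ℕ) (σ : L ≃ₐ[F] L) (μ : F) (j a : ℕ) :
    monomial p σ μ j * monomial p σ μ a =
      second p σ ^ (j / p + a / p) * first p σ μ ^ (j % p + a % p) := by
  have h := (commute_second_first p σ μ).pow_pow (a / p) (j % p)
  rw [monomial, monomial, pow_add, pow_add, mul_assoc, ← mul_assoc (first p σ μ ^ (j % p)),
    ← h.eq]
  simp only [mul_assoc]

variable [CharZero L]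

lemma map_monomial_apply (N : NearShift p v w b₁ b₂ m X Y σ μ) {ρ : L} (hρ0 : ρ ≠ 0)
    (hρ : w ρ = b₂) {a : ℕ} (ha : a < p ^ 2) :
    monomial p σ μ a ρ ≠ 0 ∧ w (monomial p σ μ a ρ) = level p b₁ b₂ a := by
  have hp := N.generators.prime.pos
  obtain ⟨h0, h⟩ := N.map_apply hρ0 hρ (Nat.mod_lt a hp)
    (Nat.div_lt_of_lt_mul (by rwa [← sq]) : a / p < p)
  refine ⟨h0, h.trans ?_⟩
  rw [level]
  ring

lemma incongruentVal_smul_monomial (N : NearShift p v w b₁ b₂ m X Y σ μ) {ρ : L} (hρ0 : ρ ≠ 0)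
    (hρ : w ρ = b₂) {c : Fin (p ^ 2) → F} (hc : ∀ a, c a ≠ 0) :
    IncongruentVal w ((p : ℤ) ^ 2) fun a : Fin (p ^ 2) => c a • monomial p σ μ a ρ where
  ne_zero a := smul_ne_zero (hc a) (N.map_monomial_apply hρ0 hρ a.2).1
  eq_of_dvd a a' h := by
    have G := N.generators
    rw [G.ramified.map_smul G.top (hc a) (N.map_monomial_apply hρ0 hρ a.2).1,
      G.ramified.map_smul G.top (hc a') (N.map_monomial_apply hρ0 hρ a'.2).1,
      (N.map_monomial_apply hρ0 hρ a.2).2, (N.map_monomial_apply hρ0 hρ a'.2).2] at h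
    obtain ⟨k, hk⟩ := h
    exact Fin.ext (N.eq_of_sq_dvd_level_sub a.2 a'.2 ⟨k - v (c a) + v (c a'), by linarith⟩)

lemma linearIndependent_smul_monomial (N : NearShift p v w b₁ b₂ m X Y σ μ) {ρ : L}
    (hρ0 : ρ ≠ 0) (hρ : w ρ = b₂) {c : Fin (p ^ 2) → F} (hc : ∀ a, c a ≠ 0) :
    LinearIndependent F fun a : Fin (p ^ 2) => c a • monomial p σ μ a :=
  LinearIndependent.of_comp (LinearMap.applyₗ ρ)
    ((N.incongruentVal_smul_monomial hρ0 hρ hc).linearIndependent N.generators.ramified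
      N.generators.top)

set_option maxHeartbeats 1000000 in
/-- The product of two monomials is congruent to a monomial or to zero. -/
lemma valGe_monomial_mul_sub (N : NearShift p v w b₁ b₂ m X Y σ μ) {ρ : L} (hρ : w ρ = b₂)
    {d : ℕ → ℤ} (hd : ∀ a < p ^ 2, (p : ℤ) ^ 2 * d a ≤ level p b₁ b₂ a)
    (hd0 : m ≤ d 0) {j a : ℕ} (hj : j < p ^ 2) (ha : a < p ^ 2)
    {n : ℤ} (hn0 : n ≤ d j - d 0) (hn : j + a < p ^ 2 → n ≤ d (j + a) - d a) :
    ValGe w ((p : ℤ) ^ 2 * (n + d a) + (p : ℤ) ^ 2)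
      (monomial p σ μ j (monomial p σ μ a ρ) -
        if j + a < p ^ 2 then monomial p σ μ (j + a) ρ else 0) := by
  have G := N.generators
  have hw := G.top
  have hp := G.prime.pos
  have hp2 : (2 : ℤ) ≤ p := by exact_mod_cast G.prime.two_le
  have hb := G.pos
  have hb₂ := N.eq_add
  have hM := N.lt_sq_mul
  have hE := N.lt_map_prime
  have hq := G.sq_pos
  have hMq := N.sq_le_M
  have hρ' : ValGe w b₂ ρ := Or.inr hρ.ge
  have hsum : j + a = p * (j / p + a / p) + (j % p + a % p) := by
    conv_lhs => rw [← Nat.div_add_mod j p, ← Nat.div_add_mod a p]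
    ring
  have hj0 := Nat.mod_lt j hp
  have ha0 := Nat.mod_lt a hp
  have hbound : (p : ℤ) ^ 2 * (n + d a) ≤
      level p b₁ b₂ j + level p b₁ b₂ a - (p : ℤ) ^ 2 * m := by
    have h1 := mul_le_mul_of_nonneg_left hn0 hq.le
    have h2 := mul_le_mul_of_nonneg_left hd0 hq.le
    linarith [hd j hj, hd a ha]
  rw [← Module.End.mul_apply, monomial_mul_monomial]
  simp only [level] at hbound
  set t := j / p + a / p with ht
  have htc : ((j / p : ℕ) : ℤ) + ((a / p : ℕ) : ℤ) = t := by rw [ht]; push_cast; ring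
  generalize (p : ℤ) ^ 2 * m = M at hb₂ hM hE hMq hbound
  have hpb : (p : ℤ) * b₁ ≤ ((p : ℤ) ^ 2 - 1) * b₁ :=
    mul_le_mul_of_nonneg_right (by nlinarith) hb.le
  have hpb₂ : p * b₂ = p * M + p * b₁ := by rw [hb₂]; ring
  rcases lt_or_ge (j % p + a % p) p with hcarry | hcarry
  · set s := j % p + a % p with hs
    have hsc : ((j % p : ℕ) : ℤ) + ((a % p : ℕ) : ℤ) = s := by rw [hs]; push_cast; ring
    rcases lt_or_ge t p with htp | htp
    · have hlt : j + a < p ^ 2 := by rw [hsum]; nlinarith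
      have hdiv : (j + a) / p = t := by
        rw [hsum, Nat.mul_add_div hp, Nat.div_eq_of_lt hcarry, add_zero]
      have hmod : (j + a) % p = s := by
        rw [hsum, Nat.mul_add_mod, Nat.mod_eq_of_lt hcarry]
      rw [if_pos hlt, monomial, hdiv, hmod, sub_self]
      exact ValGe.zero
    · have hge : ¬ j + a < p ^ 2 := by rw [hsum]; nlinarith
      obtain ⟨k, hk⟩ := Nat.exists_eq_add_of_le htp
      rw [if_neg hge, sub_zero, hk, pow_add]
      refine (((N.raises_second_pow.mul (N.raises_second.pow k)).mul
        (N.raises_first.pow s)) ρ b₂ hρ').mono ?_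
      have hkc : (t : ℤ) = p + k := by exact_mod_cast hk
      have hexp : (p : ℤ) ^ 2 * (n + d a) ≤ (2 + p + k) * b₂ + s * (p * b₁) - M := by
        refine hbound.trans (le_of_eq ?_)
        rw [← hsc]
        linear_combination b₂ * (htc + hkc)
      linarith
  · obtain ⟨s, hs⟩ := Nat.exists_eq_add_of_le hcarry
    have hsp : s < p := by omega
    have hsc : ((j % p : ℕ) : ℤ) + ((a % p : ℕ) : ℤ) = p + s := by exact_mod_cast hs
    have hsplit : second p σ ^ t * first p σ μ ^ (p + s) =
        second p σ ^ (t + 1) * first p σ μ ^ s +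
          second p σ ^ t * (first p σ μ ^ p - second p σ) * first p σ μ ^ s := by
      rw [pow_add (first p σ μ), pow_succ (second p σ), mul_sub, sub_mul]
      simp only [mul_assoc]
      abel
    have herr := ((N.raises_second.pow t).mul N.raises_first_pow_sub).mul
      (N.raises_first.pow s) ρ b₂ hρ'
    rw [hs, hsplit, LinearMap.add_apply]
    rw [hs] at hsum
    have hexp : (p : ℤ) ^ 2 * (n + d a) ≤ (2 + t) * b₂ + (p + s) * (p * b₁) - M := by
      refine hbound.trans (le_of_eq ?_)
      linear_combination b₂ * htc + p * b₁ * hsc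
    rcases lt_or_ge (t + 1) p with htp | htp
    · have hlt : j + a < p ^ 2 := by rw [hsum]; nlinarith
      have hsum' : j + a = p * (t + 1) + s := by rw [hsum]; ring
      have hdiv : (j + a) / p = t + 1 := by
        rw [hsum', Nat.mul_add_div hp, Nat.div_eq_of_lt hsp, add_zero]
      have hmod : (j + a) % p = s := by
        rw [hsum', Nat.mul_add_mod, Nat.mod_eq_of_lt hsp]
      have hda := hd (j + a) hlt
      have hn' := hn hlt
      rw [level, hdiv, hmod] at hda
      rw [if_pos hlt, monomial, hdiv, hmod, add_sub_cancel_left]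
      refine herr.mono ?_
      push_cast at hda
      have h1 := mul_le_mul_of_nonneg_left hn' hq.le
      linarith
    · have hge : ¬ j + a < p ^ 2 := by rw [hsum]; nlinarith
      rw [if_neg hge, sub_zero]
      refine hw.valGe_add ?_ (herr.mono ?_)
      · obtain ⟨k, hk⟩ := Nat.exists_eq_add_of_le htp
        rw [hk, pow_add]
        refine (((N.raises_second_pow.mul (N.raises_second.pow k)).mul
          (N.raises_first.pow s)) ρ b₂ hρ').mono ?_
        have hkc : (t : ℤ) + 1 = p + k := by exact_mod_cast hk
        have hexp' : (p : ℤ) ^ 2 * (n + d a) ≤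
            (1 + p + k) * b₂ + (p + s) * (p * b₁) - M := by
          refine hexp.trans (le_of_eq ?_)
          linear_combination b₂ * hkc
        linarith
      · linarith

end NearShift

end AssociatedOrder

section AssociatedOrder

variable {F L : Type*} [Field F] [Field L] [Algebra F L] {p : ℕ} {v : F → ℤ} {w : L → ℤ}
  {b₁ b₂ m : ℤ} {X Y : L} {σ : L ≃ₐ[F] L} {μ : F}

namespace NearShift

/-- The integers `d` are the integral parts of the levels divided by `p ^ 2`, and `ω j` is the
least increment of `d` over an interval of length `j`. -/
structure Exponents (p : ℕ) (b₁ b₂ m : ℤ) (d ω : ℕ → ℤ) : Prop where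
  mul_le : ∀ a < p ^ 2, (p : ℤ) ^ 2 * d a ≤ level p b₁ b₂ a
  lt_mul_add : ∀ a < p ^ 2, level p b₁ b₂ a < (p : ℤ) ^ 2 * d a + (p : ℤ) ^ 2
  le_zero : m ≤ d 0
  le_sub : ∀ j a, j + a < p ^ 2 → ω j ≤ d (j + a) - d a
  exists_eq : ∀ j < p ^ 2, ∃ a, j + a < p ^ 2 ∧ ω j = d (j + a) - d a

variable [CharZero F] [CharZero L] {d ω : ℕ → ℤ} {ρ : L} {π : F}

lemma valGe_monomial_sub (N : NearShift p v w b₁ b₂ m X Y σ μ) (hρ : w ρ = b₂)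
    (D : Exponents p b₁ b₂ m d ω) {j a : ℕ} (hj : j < p ^ 2) (ha : a < p ^ 2) :
    ValGe w ((p : ℤ) ^ 2 * (ω j + d a) + (p : ℤ) ^ 2)
      (monomial p σ μ j (monomial p σ μ a ρ) -
        if j + a < p ^ 2 then monomial p σ μ (j + a) ρ else 0) :=
  N.valGe_monomial_mul_sub hρ D.mul_le D.le_zero hj ha (D.le_sub j 0 hj) (D.le_sub j a)

lemma valGe_monomial_monomial (N : NearShift p v w b₁ b₂ m X Y σ μ) (hρ0 : ρ ≠ 0)
    (hρ : w ρ = b₂) (D : Exponents p b₁ b₂ m d ω) {j a : ℕ} (hj : j < p ^ 2) (ha : a < p ^ 2) :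
    ValGe w ((p : ℤ) ^ 2 * (ω j + d a)) (monomial p σ μ j (monomial p σ μ a ρ)) := by
  have hq := N.generators.sq_pos
  rw [← sub_add_cancel (monomial p σ μ j (monomial p σ μ a ρ))
    (if j + a < p ^ 2 then monomial p σ μ (j + a) ρ else 0)]
  refine N.generators.top.valGe_add ((N.valGe_monomial_sub hρ D hj ha).mono (by linarith)) ?_
  split_ifs with h
  · refine Or.inr ?_
    rw [(N.map_monomial_apply hρ0 hρ h).2]
    refine le_trans (mul_le_mul_of_nonneg_left ?_ hq.le) (D.mul_le _ h)
    linarith [D.le_sub j a h]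
  · exact ValGe.zero

/-- The rescaled monomials preserve integrality. -/
lemma valGe_smul_monomial_apply (N : NearShift p v w b₁ b₂ m X Y σ μ)
    (hdeg : Module.finrank F L = p ^ 2) (hρ0 : ρ ≠ 0)
    (hρ : w ρ = b₂) (D : Exponents p b₁ b₂ m d ω) (hπ0 : π ≠ 0) (hπ : v π = 1)
    {j : ℕ} (hj : j < p ^ 2) {z : L} (hz : ValGe w 0 z) :
    ValGe w 0 ((π ^ (-ω j) • monomial p σ μ j) z) := by
  have G := N.generators
  have hq := G.sq_pos
  have hinc := N.incongruentVal_smul_monomial hρ0 hρ (c := fun _ => 1) fun _ => one_ne_zero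
  have : Nonempty (Fin (p ^ 2)) := ⟨⟨0, pow_pos G.prime.pos 2⟩⟩
  obtain ⟨c, rfl⟩ : ∃ c : Fin (p ^ 2) → F,
      ∑ a, c a • ((1 : F) • monomial p σ μ a ρ) = z := by
    have hspan := (hinc.linearIndependent G.ramified G.top).span_eq_top_of_card_eq_finrank
      (by rw [Fintype.card_fin, hdeg])
    exact (Submodule.mem_span_range_iff_exists_fun F).1 (hspan ▸ Submodule.mem_top)
  have hc := hinc.valGe_of_valGe_sum G.ramified G.top hz
  rw [map_sum]
  refine G.top.valGe_sum fun a ha => ?_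
  rw [map_smul]
  rcases eq_or_ne (c a) 0 with h0 | h0
  · exact Or.inl (by rw [h0, zero_smul])
  have hca := (hc a ha).le (smul_ne_zero h0 (hinc.ne_zero a))
  obtain ⟨hne, hval⟩ := N.map_monomial_apply hρ0 hρ a.2
  rw [G.ramified.map_smul G.top h0 (hinc.ne_zero a), one_smul, hval] at hca
  have hvc : 0 ≤ v (c a) + d a := by
    by_contra! hlt
    nlinarith [D.lt_mul_add a a.2]
  rw [one_smul, LinearMap.smul_apply, smul_smul]
  have hπω : π ^ (-ω j) ≠ 0 := zpow_ne_zero _ hπ0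
  refine (G.ramified.valGe_smul G.top hq (Or.inr le_rfl)
    (N.valGe_monomial_monomial hρ0 hρ D hj a.2)).mono ?_
  rw [G.base.map_mul _ _ h0 hπω, G.base.map_zpow hπ0, hπ]
  nlinarith

/-- A combination of rescaled monomials that preserves integrality has integral coefficients. -/
lemma valGe_coeff (N : NearShift p v w b₁ b₂ m X Y σ μ) (hρ0 : ρ ≠ 0)
    (hρ : w ρ = b₂) (D : Exponents p b₁ b₂ m d ω) (hπ0 : π ≠ 0) (hπ : v π = 1)
    {c : Fin (p ^ 2) → F}
    (hα : ∀ z, ValGe w 0 z →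
      ValGe w 0 ((∑ j, c j • (π ^ (-ω j) • monomial p σ μ j)) z)) (i : Fin (p ^ 2)) :
    ValGe v 0 (c i) := by
  have G := N.generators
  have hv := G.base
  have hw := G.top
  have hram := G.ramified
  have hq := G.sq_pos
  have hπz (n : ℤ) : π ^ n ≠ 0 := zpow_ne_zero _ hπ0
  have hvπ (n : ℤ) : v (π ^ n) = n := by rw [hv.map_zpow hπ0, hπ, mul_one]
  classical
  have hsmul {c : F} {x : L} {r : ℤ} (hx : ValGe w r x) :
      ValGe w ((p : ℤ) ^ 2 * v c + r) (c • x) :=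
    hram.valGe_smul hw hq (Or.inr le_rfl) hx
  by_contra hi
  have hci : c i ≠ 0 := fun h => hi (Or.inl h)
  obtain ⟨j, hj, hmin⟩ := (Finset.univ.filter (c · ≠ 0)).exists_min_image (fun j => v (c j))
    ⟨i, by simp [hci]⟩
  have hcj : c j ≠ 0 := (Finset.mem_filter.1 hj).2
  have hneg : v (c j) < 0 := (hmin i (by simp [hci])).trans_lt (not_le.1 fun h => hi (Or.inr h))
  obtain ⟨a, hja, hω⟩ := D.exists_eq j j.2
  have ha : a < p ^ 2 := by omega
  have hlevel := D.mul_le a ha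
  obtain ⟨hne, hval⟩ := N.map_monomial_apply hρ0 hρ ha
  set α := ∑ j, c j • (π ^ (-ω j) • monomial p σ μ j)
  set f : Fin (p ^ 2) → L := fun i =>
    if (i : ℕ) + a < p ^ 2 then monomial p σ μ (i + a) ρ else 0
  have hαa : ValGe w ((p : ℤ) ^ 2 * d a) (α (monomial p σ μ a ρ)) := by
    have h := hsmul (c := π ^ d a) (hα (π ^ (-d a) • monomial p σ μ a ρ) (Or.inr (by
      rw [hram.map_smul hw (hπz _) hne, hvπ, hval]
      linarith)))
    rwa [map_smul, smul_smul, ← zpow_add₀ hπ0, add_neg_cancel, zpow_zero, one_smul, hvπ,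
      add_zero] at h
  have hsum : ValGe w ((p : ℤ) ^ 2 * (v (c j) + d a) + (p : ℤ) ^ 2)
      (∑ i, (c i * π ^ (-ω i)) • f i) := by
    have heq : ∑ i, (c i * π ^ (-ω i)) • f i = α (monomial p σ μ a ρ) -
        ∑ i : Fin (p ^ 2), (c i * π ^ (-ω i)) •
          (monomial p σ μ i (monomial p σ μ a ρ) - f i) := by
      simp only [α, LinearMap.sum_apply, LinearMap.smul_apply, smul_sub, smul_smul,
        Finset.sum_sub_distrib, sub_sub_cancel]
    rw [heq]
    refine hw.valGe_sub (hαa.mono (by nlinarith)) (hw.valGe_sum fun k _ => ?_)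
    rcases eq_or_ne (c k) 0 with h0 | h0
    · exact Or.inl (by rw [h0, zero_mul, zero_smul])
    refine (hsmul (N.valGe_monomial_sub hρ D k.2 ha)).mono ?_
    rw [hv.map_mul _ _ h0 (hπz _), hvπ]
    have := mul_le_mul_of_nonneg_left (hmin k (by simp [h0])) hq.le
    linarith
  have hterm := hw.valGe_of_valGe_sum (fun k _ l _ hk hl hkl => ?_) hsum j (Finset.mem_univ j)
  · have hfj : f j = monomial p σ μ (j + a) ρ := if_pos hja
    obtain ⟨hne', hval'⟩ := N.map_monomial_apply hρ0 hρ hja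
    have h := hterm.le (by rw [hfj]; exact smul_ne_zero (mul_ne_zero hcj (hπz _)) hne')
    rw [hfj, hram.map_smul hw (mul_ne_zero hcj (hπz _)) hne', hv.map_mul _ _ hcj (hπz _), hvπ,
      hval', hω] at h
    linarith [D.lt_mul_add _ hja]
  · have hck := left_ne_zero_of_smul hk
    have hcl := left_ne_zero_of_smul hl
    have hfk := right_ne_zero_of_smul hk
    have hfl := right_ne_zero_of_smul hl
    have hka : (k : ℕ) + a < p ^ 2 := by
      by_contra hcon
      exact hfk (if_neg hcon)
    have hla : (l : ℕ) + a < p ^ 2 := by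
      by_contra hcon
      exact hfl (if_neg hcon)
    have hfk' : f k = monomial p σ μ (k + a) ρ := if_pos hka
    have hfl' : f l = monomial p σ μ (l + a) ρ := if_pos hla
    rw [hram.map_smul hw hck hfk, hram.map_smul hw hcl hfl, hfk', hfl',
      (N.map_monomial_apply hρ0 hρ hka).2, (N.map_monomial_apply hρ0 hρ hla).2] at hkl
    have := N.eq_of_sq_dvd_level_sub hka hla
      ⟨v (c l * π ^ (-ω l)) - v (c k * π ^ (-ω k)), by linarith⟩
    exact Fin.ext (by omega)

/-- The associated order of the valuation ring is spanned by the rescaled monomials. -/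
theorem mem_associatedOrder_iff (N : NearShift p v w b₁ b₂ m X Y σ μ) [IsGalois F L]
    [FiniteDimensional F L] (hdeg : Module.finrank F L = p ^ 2) (hρ0 : ρ ≠ 0)
    (hρ : w ρ = b₂) (D : Exponents p b₁ b₂ m d ω) (hπ0 : π ≠ 0) (hπ : v π = 1)
    (α : Module.End F L) :
    (α ∈ groupAlgebra F L ∧ ∀ z, ValGe w 0 z → ValGe w 0 (α z)) ↔
      ∃ c : Fin (p ^ 2) → F, (∀ i, ValGe v 0 (c i)) ∧
        α = ∑ j, c j • (π ^ (-ω j) • monomial p σ μ j) := by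
  have G := N.generators
  have hψ (j : ℕ) : π ^ (-ω j) • monomial p σ μ j ∈ groupAlgebra F L :=
    Subalgebra.smul_mem _ (monomial_mem_groupAlgebra p σ μ j) _
  constructor
  · rintro ⟨hmem, hα⟩
    have hli := N.linearIndependent_smul_monomial hρ0 hρ
      (c := fun j => π ^ (-ω j)) fun _ => zpow_ne_zero _ hπ0
    have hspan : Submodule.span F
        (Set.range fun j : Fin (p ^ 2) => π ^ (-ω j) • monomial p σ μ j) =
        Subalgebra.toSubmodule (groupAlgebra F L) := by
      refine Submodule.eq_of_le_of_finrank_le (Submodule.span_le.2 ?_) ?_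
      · rintro _ ⟨j, rfl⟩
        exact hψ j
      · rw [finrank_span_eq_card hli, Fintype.card_fin, ← hdeg]
        exact finrank_groupAlgebra_le
    rw [← Subalgebra.mem_toSubmodule, ← hspan, Submodule.mem_span_range_iff_exists_fun] at hmem
    obtain ⟨c, rfl⟩ := hmem
    exact ⟨c, N.valGe_coeff hρ0 hρ D hπ0 hπ hα, rfl⟩
  · rintro ⟨c, hc, rfl⟩
    refine ⟨sum_mem fun j _ => Subalgebra.smul_mem _ (hψ j) _, fun z hz => ?_⟩
    rw [LinearMap.sum_apply]
    refine G.top.valGe_sum fun j _ => ?_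
    have h := N.valGe_smul_monomial_apply hdeg hρ0 hρ D hπ0 hπ j.2 hz
    rw [LinearMap.smul_apply]
    simpa using G.ramified.valGe_smul G.top G.sq_pos (hc j) h

end NearShift

end AssociatedOrder

/-- Theorem 4.5(a): if `p²e₀ − (p+1)b₂ + (p−1)b₁ > 0`, the
associated order `𝔄 = {α ∈ K₀[G] : α·𝔒₂ ⊆ 𝔒₂}` of `𝔒₂` has `𝔒₀`-basis
`{π₀^{−w_j}·Ψ^{(j)}}_{j=0}^{p²−1}`.  Here `K₀[G]` is realized as the `K₀`-span
of `G` inside `End_{K₀}(K₂)`, and the basis property is expressed as linear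
independence together with: `α` lies in the associated order iff `α` is an
`𝔒₀`-linear combination of the `π₀^{−w_j}·Ψ^{(j)}`. -/
theorem statement18
    (p : ℕ) (hp : p.Prime)
    (K0 K2 : Type*) [Field K0] [Field K2] [CharZero K0] [CharZero K2]
    [Algebra K0 K2] [IsGalois K0 K2] [FiniteDimensional K0 K2]
    (hdeg : Module.finrank K0 K2 = p ^ 2)
    (hcyc : IsCyclic (K2 ≃ₐ[K0] K2))
    (v0 : K0 → ℤ) (v2 : K2 → ℤ)
    (hv0 : IsDiscVal v0) (hv2 : IsDiscVal v2)
    (e0 : ℤ) (he0 : e0 = v0 (p : K0)) (he0pos : 1 ≤ e0)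
    (hram : ∀ x : K0, x ≠ 0 → v2 (algebraMap K0 K2 x) = (p : ℤ) ^ 2 * v0 x)
    (a1 μ a2 : K0) (ha1 : a1 ≠ 0) (hμ0 : μ ≠ 0)
    (hwitt : ∀ y : K0, y ^ p - y ≠ a1)
    (hnd : ¬ ((p : ℤ) ∣ v0 a1))
    (hneg : v0 a1 < 0)
    (hbd : -((p : ℤ) * e0) < ((p : ℤ) ^ 2 - 1) * v0 a1)
    (m : ℤ) (hm : m = -v0 μ) (hmpos : 0 < m)
    (hmu1 : (p : ℤ) ^ 2 * (p - 1) * m - (2 * p * (p - 1) + 1) * v0 a1 < (p : ℤ) ^ 2 * e0)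
    (hmu2 : -(((p : ℤ) ^ 2 - 1) * v0 a1) < (p : ℤ) ^ 2 * m)
    (ha2 : a2 = μ ^ p * a1)
    (x1 x2 : K2)
    (hx1 : x1 ^ p - x1 = algebraMap K0 K2 a1)
    (hx2 : x2 ^ p - x2 = algebraMap K0 K2 a2 +
      (x1 ^ p + (algebraMap K0 K2 a1) ^ p - (x1 + algebraMap K0 K2 a1) ^ p) / (p : K2))
    (hgen : Algebra.adjoin K0 {x1, x2} = ⊤)
    (b1 b2 : ℤ) (hb1 : b1 = -v0 a1) (hb2 : b2 = (p : ℤ) ^ 2 * m + b1)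
    (σ1 : K2 ≃ₐ[K0] K2) (ε δ' : K2)
    (hσ1x1 : σ1 x1 = x1 + 1 + ε)
    (hε : ε ≠ 0) (hεv : v2 ε = (p : ℤ) ^ 2 * e0 - p * (p - 1) * b1)
    (hσ1x2 : σ1 x2 = x2 + (x1 ^ p + 1 - (x1 + 1) ^ p) / (p : K2) + δ')
    (hδ' : δ' = 0 ∨ 0 < v2 δ')
    (Ψ1 Ψ2 : Module.End K0 K2)
    (hΨ2 : Ψ2 = ((σ1 ^ p).toLinearMap : Module.End K0 K2) - 1)
    (hΨ1 : Ψ1 = (σ1.toLinearMap : Module.End K0 K2) *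
      (∑ i ∈ Finset.range p,
        ((∏ k ∈ Finset.range i, (μ - (k : K0))) / (Nat.factorial i : K0)) • Ψ2 ^ i) - 1)
    (π0 : K0) (hπ0 : π0 ≠ 0) (hπ0v : v0 π0 = 1)
    (ρ0 : K2) (hρ0 : ρ0 ≠ 0) (hρ0v : v2 ρ0 = b2 % (p : ℤ) ^ 2)
    (d : ℕ → ℤ)
    (hd : ∀ a : ℕ, a < p ^ 2 →
      d a = Int.fdiv ((1 + ((a / p : ℕ) : ℤ)) * b2 + ((a % p : ℕ) : ℤ) * (p : ℤ) * b1)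
        ((p : ℤ) ^ 2))
    (Ψf : ℕ → Module.End K0 K2)
    (hΨf : ∀ a : ℕ, Ψf a = if a < p ^ 2 then Ψ2 ^ (a / p) * Ψ1 ^ (a % p) else 0)
    (ρ : K2) (hρ : ρ = algebraMap K0 K2 (π0 ^ d 0) * ρ0)
    (ρf : ℕ → K2) (hρf : ∀ a : ℕ, ρf a = algebraMap K0 K2 (π0 ^ (-d a)) * Ψf a ρ)
    (wj : ℕ → ℤ)
    (hwj : ∀ j : ℕ, j < p ^ 2 →
      IsLeast {x : ℤ | ∃ a : ℕ, a < p ^ 2 - j ∧ x = d (j + a) - d a} (wj j))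
    (hbig : 0 < (p : ℤ) ^ 2 * e0 - (p + 1) * b2 + (p - 1) * b1) :
    LinearIndependent K0 (fun j : Fin (p ^ 2) => π0 ^ (-wj j) • Ψf j) ∧
    (∀ α : Module.End K0 K2,
      (α ∈ Submodule.span K0
          {f : Module.End K0 K2 | ∃ σ : K2 ≃ₐ[K0] K2, f = (σ.toLinearMap : Module.End K0 K2)} ∧
        ∀ z : K2, (z = 0 ∨ 0 ≤ v2 z) → (α z = 0 ∨ 0 ≤ v2 (α z))) ↔
      (∃ c : Fin (p ^ 2) → K0, (∀ i, c i = 0 ∨ 0 ≤ v0 (c i)) ∧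
        α = ∑ j, c j • (π0 ^ (-wj j) • Ψf j))) := by
  have hp2 : (0 : ℤ) < (p : ℤ) ^ 2 := pow_pos (by exact_mod_cast hp.pos) 2
  have hwp : v2 (p : K2) = (p : ℤ) ^ 2 * e0 := by
    rw [he0, ← hram _ (Nat.cast_ne_zero.2 hp.ne_zero), map_natCast]
  have W : WittExtension p v0 v2 b1 m a1 μ x1 x2 ε δ' σ1 :=
    { prime := hp
      base := hv0
      top := hv2
      ramified := hram
      finrank_eq := hdeg
      one_le_map_prime := he0 ▸ he0pos
      a_ne_zero := ha1
      map_a := by rw [hb1, neg_neg]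
      b_pos := by omega
      not_dvd := by rwa [hb1, dvd_neg]
      μ_ne_zero := hμ0
      map_μ := by rw [hm, neg_neg]
      m_pos := hmpos
      lt_sq_mul := by rw [hb1]; linarith
      lt_map_prime := by rw [hwp]; rw [hb2] at hbig; linarith
      eq_x₁ := hx1
      eq_x₂ := by rw [hx2, ha2, wittD]
      apply_x₁ := hσ1x1
      valGe_ε := Or.inr (by rw [hwp, hεv])
      apply_x₂ := by rw [hσ1x2, wittD, one_pow]
      valGe_δ := hδ'
      pow_sq := by
        rw [← hdeg, ← IsGalois.card_aut_eq_finrank]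
        exact pow_card_eq_one' }
  have N := W.nearShift
  rw [← hb2] at N
  have hΨ2' : Ψ2 = NearShift.second p σ1 := by
    rw [hΨ2, algEquiv_toLinearMap_pow, NearShift.second]
  have hΨ1' : Ψ1 = NearShift.first p σ1 μ := by
    simp only [hΨ1, hΨ2', NearShift.first, NearShift.truncatedPow, ring_choose_eq_prod_div]
  have hmonomial (j : Fin (p ^ 2)) : Ψf j = NearShift.monomial p σ1 μ j := by
    rw [hΨf, if_pos j.2, hΨ2', hΨ1', NearShift.monomial]
  have hd' (a : ℕ) (ha : a < p ^ 2) : d a = NearShift.level p b1 b2 a / (p : ℤ) ^ 2 := by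
    rw [hd a ha, Int.fdiv_eq_ediv_of_nonneg _ hp2.le, NearShift.level]
  have hd0 : d 0 = b2 / (p : ℤ) ^ 2 := by
    rw [hd' 0 (pow_pos hp.pos 2), NearShift.level]
    simp
  have D : NearShift.Exponents p b1 b2 m d wj :=
    { mul_le := fun a ha => hd' a ha ▸ Int.mul_ediv_self_le hp2.ne'
      lt_mul_add := fun a ha => hd' a ha ▸ Int.lt_mul_ediv_self_add hp2
      le_zero := by
        rw [hd0]
        exact Int.le_ediv_of_mul_le hp2 (by rw [hb2, hb1]; linarith)
      le_sub := fun j a h => (hwj j (by omega)).2 ⟨a, by omega, rfl⟩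
      exists_eq := fun j hj => by
        obtain ⟨a, ha, h⟩ := (hwj j hj).1
        exact ⟨a, by omega, h⟩ }
  have hπd : π0 ^ d 0 ≠ 0 := zpow_ne_zero _ hπ0
  have hρne : ρ ≠ 0 := by
    rw [hρ]
    exact mul_ne_zero ((map_ne_zero _).2 hπd) hρ0
  have hρval : v2 ρ = b2 := by
    rw [hρ, ← Algebra.smul_def, W.ramified.map_smul hv2 hπd hρ0, hv0.map_zpow hπ0, hπ0v, hρ0v,
      hd0, mul_one, Int.mul_ediv_add_emod]
  simp only [hmonomial]
  exact ⟨N.linearIndependent_smul_monomial hρne hρval fun _ => zpow_ne_zero _ hπ0,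
    N.mem_associatedOrder_iff hdeg hρne hρval D hπ0 hπ0v⟩
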